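/- arXiv:2503.04699 — 3 statements merged into one kernel-verified Lean document; each statement's English description precedes it below -/
import Mathlib

section
/- Let k be a field, R a commutative k-algebra, and f, g ∈ R. Consider the Koszul complex R → R × R → R with maps h_X : u ↦ (f·u, −g·u) and h_Z† : (u, v) ↦ g·u + f·v, so that h_Z† ∘ h_X = 0. Then the first homology H := (LinearMap.ker h_Z†) ⧸ (range h_X, viewed as a submodule of ker h_Z†) is isomorphic as a k-vector space to the direct sum (Ann_R(f) ⧸ g·Ann_R(f)) × Ann_{R/(f)}(g), where Ann_R(f) = {r ∈ R : r·f = 0}, g·Ann_R(f) is the image of Ann_R(f) under multiplication by g, and Ann_{R/(f)}(g) = {u ∈ R ⧸ Ideal.span {f} : u · (class of g) = 0}. -/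
noncomputable section

variable (k : Type) [Field k] (R : Type) [CommRing R] [Algebra k R] (f g : R)

/-- The Koszul map `h_X : R → R × R`, `u ↦ (f·u, −g·u)`. -/
def hX : R →ₗ[k] R × R :=
  (LinearMap.mulLeft k f).prod (-(LinearMap.mulLeft k g))

/-- The Koszul map `h_Z† : R × R → R`, `(u, v) ↦ g·u + f·v`. -/
def hZdag : R × R →ₗ[k] R :=
  (LinearMap.mulLeft k g).coprod (LinearMap.mulLeft k f)

/-- The annihilator `Ann_R(f) = {r : r·f = 0}` as a `k`-submodule of `R`. -/
def annF : Submodule k R := LinearMap.ker (LinearMap.mulRight k f)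

/-- The image `g·Ann_R(f)` of `Ann_R(f)` under multiplication by `g`. -/
def gAnnF : Submodule k R := (annF k R f).map (LinearMap.mulLeft k g)

/-- The annihilator of the class of `g` in the quotient ring `R ⧸ (f)`. -/
def annQg : Submodule k (R ⧸ Ideal.span ({f} : Set R)) :=
  LinearMap.ker (LinearMap.mulRight k (Ideal.Quotient.mk (Ideal.span ({f} : Set R)) g))

/-- The inclusion `r ↦ (0, r)` of `Ann_R(f)` into the kernel of `h_Z†`. -/
def annFToKer : annF k R f →ₗ[k] LinearMap.ker (hZdag k R f g) :=
  ((LinearMap.inr k R R).comp (annF k R f).subtype).codRestrict _ fun r => by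
    have hr : (r : R) * f = 0 := r.2
    simp [hZdag, mul_comm f, hr]

/-- The map `(u, v) ↦ [u]` from the kernel of `h_Z†` to `Ann_{R/(f)}(g)`. -/
def kerToAnnQg : LinearMap.ker (hZdag k R f g) →ₗ[k] annQg k R f g :=
  (((Ideal.Quotient.mkₐ k (Ideal.span ({f} : Set R))).toLinearMap.comp
    (LinearMap.fst k R R)).comp (LinearMap.ker (hZdag k R f g)).subtype).codRestrict _
    fun x => by
      have hx : g * x.1.1 + f * x.1.2 = 0 := x.2
      change Ideal.Quotient.mk _ x.1.1 * Ideal.Quotient.mk _ g = 0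
      rw [← map_mul, Ideal.Quotient.eq_zero_iff_mem, Ideal.mem_span_singleton]
      exact ⟨-x.1.2, by linear_combination hx⟩

theorem kerToAnnQg_surjective : Function.Surjective (kerToAnnQg k R f g) := by
  rintro ⟨q, hq⟩
  obtain ⟨u, rfl⟩ := Ideal.Quotient.mk_surjective q
  change Ideal.Quotient.mk _ u * Ideal.Quotient.mk _ g = 0 at hq
  rw [← map_mul, Ideal.Quotient.eq_zero_iff_mem, Ideal.mem_span_singleton] at hq
  obtain ⟨v, hv⟩ := hq
  refine ⟨⟨(u, -v), ?_⟩, rfl⟩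
  change g * u + f * -v = 0
  linear_combination hv

/-- The range of `h_X` as a submodule of the kernel of `h_Z†`. -/
abbrev koszulBoundaries : Submodule k (LinearMap.ker (hZdag k R f g)) :=
  (LinearMap.range (hX k R f g)).comap (LinearMap.ker (hZdag k R f g)).subtype

theorem mem_koszulBoundaries (x : LinearMap.ker (hZdag k R f g)) :
    x ∈ koszulBoundaries k R f g ↔ ∃ w, f * w = x.1.1 ∧ -(g * w) = x.1.2 :=
  exists_congr fun _ => Prod.ext_iff

theorem kerToAnnQg_eq_zero_iff (x : LinearMap.ker (hZdag k R f g)) :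
    kerToAnnQg k R f g x = 0 ↔ ∃ w, x.1.1 = f * w := by
  rw [← Submodule.coe_eq_zero]
  change Ideal.Quotient.mk _ x.1.1 = 0 ↔ _
  rw [Ideal.Quotient.eq_zero_iff_mem, Ideal.mem_span_singleton]
  rfl

theorem comap_annFToKer_koszulBoundaries :
    (koszulBoundaries k R f g).comap (annFToKer k R f g) =
      (gAnnF k R f g).comap (annF k R f).subtype := by
  ext r
  rw [Submodule.mem_comap, mem_koszulBoundaries]
  change (∃ w, f * w = 0 ∧ -(g * w) = (r : R)) ↔ ∃ a, a * f = 0 ∧ g * a = (r : R)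
  constructor
  · rintro ⟨w, hw, hr⟩
    exact ⟨-w, by linear_combination -hw, by linear_combination hr⟩
  · rintro ⟨a, ha, hr⟩
    exact ⟨-a, by linear_combination -ha, by linear_combination hr⟩

theorem koszulBoundaries_le_ker :
    koszulBoundaries k R f g ≤ LinearMap.ker (kerToAnnQg k R f g) := by
  intro x hx
  obtain ⟨w, hw, -⟩ := (mem_koszulBoundaries k R f g x).1 hx
  exact (kerToAnnQg_eq_zero_iff k R f g x).2 ⟨w, hw.symm⟩

/-- The map `Ann_R(f) ⧸ g·Ann_R(f) → H` induced by `r ↦ (0, r)`. -/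
def annFQuotientToHomology :
    (annF k R f ⧸ (gAnnF k R f g).comap (annF k R f).subtype) →ₗ[k]
      LinearMap.ker (hZdag k R f g) ⧸ koszulBoundaries k R f g :=
  Submodule.mapQ _ _ (annFToKer k R f g) (comap_annFToKer_koszulBoundaries k R f g).ge

/-- The map `H → Ann_{R/(f)}(g)` induced by `(u, v) ↦ [u]`. -/
def homologyToAnnQg :
    (LinearMap.ker (hZdag k R f g) ⧸ koszulBoundaries k R f g) →ₗ[k] annQg k R f g :=
  Submodule.liftQ _ (kerToAnnQg k R f g) (koszulBoundaries_le_ker k R f g)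

theorem annFQuotientToHomology_injective :
    Function.Injective (annFQuotientToHomology k R f g) := by
  rw [← LinearMap.ker_eq_bot, annFQuotientToHomology, Submodule.ker_mapQ,
    comap_annFToKer_koszulBoundaries, Submodule.mkQ_map_self]

theorem homologyToAnnQg_surjective : Function.Surjective (homologyToAnnQg k R f g) :=
  fun q => (kerToAnnQg_surjective k R f g q).imp' (Submodule.Quotient.mk) fun _ h => h

theorem exact_annFQuotientToHomology_homologyToAnnQg :
    Function.Exact (annFQuotientToHomology k R f g) (homologyToAnnQg k R f g) := by
  intro y
  obtain ⟨x, rfl⟩ := Submodule.Quotient.mk_surjective _ y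
  constructor
  · intro h
    obtain ⟨w, hw⟩ := (kerToAnnQg_eq_zero_iff k R f g x).1 h
    have hx : g * x.1.1 + f * x.1.2 = 0 := x.2
    have hr : x.1.2 + g * w ∈ annF k R f := by
      change (x.1.2 + g * w) * f = 0
      linear_combination hx - g * hw
    refine ⟨Submodule.Quotient.mk ⟨_, hr⟩, (Submodule.Quotient.eq _).2 ?_⟩
    refine (mem_koszulBoundaries k R f g _).2 ⟨-w, ?_, ?_⟩
    · change f * -w = 0 - x.1.1
      linear_combination hw
    · change -(g * -w) = x.1.2 + g * w - x.1.2
      ring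
  · rintro ⟨z, hz⟩
    obtain ⟨r, rfl⟩ := Submodule.Quotient.mk_surjective _ z
    rw [← hz]
    exact (kerToAnnQg_eq_zero_iff k R f g _).2 ⟨0, (mul_zero f).symm⟩

/-- The first homology of the Koszul complex `R → R × R → R` (kernel of `h_Z†` modulo range
of `h_X`) is isomorphic as a `k`-vector space to
`(Ann_R(f) ⧸ g·Ann_R(f)) × Ann_{R/(f)}(g)`. -/
theorem koszul_first_homology :
    Nonempty (
      ((LinearMap.ker (hZdag k R f g)) ⧸
        ((LinearMap.range (hX k R f g)).comap (LinearMap.ker (hZdag k R f g)).subtype))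
      ≃ₗ[k]
      (((annF k R f) ⧸ ((gAnnF k R f g).comap (annF k R f).subtype)) × (annQg k R f g))) := by
  obtain ⟨s, hs⟩ := (homologyToAnnQg k R f g).exists_rightInverse_of_surjective
    (LinearMap.range_eq_top.2 (homologyToAnnQg_surjective k R f g))
  exact ⟨((exact_annFQuotientToHomology_homologyToAnnQg k R f g).splitSurjectiveEquiv
    (annFQuotientToHomology_injective k R f g) ⟨s, hs⟩).1⟩
end
end

section
/- Let α, β, a, b be integers with α ≥ 1, β ≥ 1, a ≥ 0, b ≥ 0 and a·b > (α + 1)·(β + 1). Then the topological index of the BB(ᾱ, β̄, a, b) code, with f = 1 + x + x^{-α} y^{b} and g = 1 + y + y^{-β} x^{a} in R, is Q = dim_{F₂} R ⧸ (f, g) = a·b − α·β. -/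
noncomputable section

/-- The Laurent polynomial ring `F₂[x^±, y^±]` as a group algebra. -/
abbrev LaurentR : Type := AddMonoidAlgebra (ZMod 2) (ℤ × ℤ)

/-- The monomial `x^i y^j`. -/
def mono (i j : ℤ) : LaurentR := AddMonoidAlgebra.single (i, j) 1

/-- The BB polynomial `f = 1 + x + x^{-α} y^{b}`. -/
def fBB (α b : ℤ) : LaurentR := 1 + mono 1 0 + mono (-α) b

/-- The BB polynomial `g = 1 + y + y^{-β} x^{a}`. -/
def gBB (β a : ℤ) : LaurentR := 1 + mono 0 1 + mono a (-β)

section Filtration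

open AddMonoidAlgebra

variable {k Γ : Type*} [Field k] [AddCancelCommMonoid Γ]

variable (k) in
/-- The elements all of whose monomials have weight at least `M`. -/
def weightGE (w : Γ →+ ℤ) (M : ℤ) : Submodule k (AddMonoidAlgebra k Γ) :=
  AddMonoidAlgebra.supported k k {n | M ≤ w n}

/-- The exponents divisible neither by `u` nor by `v`. -/
def stairs (u v : Γ) : Set Γ := {n | (¬∃ d, n = u + d) ∧ ¬∃ d, n = v + d}

variable {w : Γ →+ ℤ} {M N : ℤ} {u v n : Γ} {F G p q r s t : AddMonoidAlgebra k Γ}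

theorem mem_weightGE : s ∈ weightGE k w M ↔ ∀ n, w n < M → s.coeff n = 0 := by
  simp [weightGE, AddMonoidAlgebra.mem_supported']

theorem single_mem_weightGE {c : k} (h : M ≤ w n) : single n c ∈ weightGE k w M := by
  rw [mem_weightGE]
  intro m hm
  rw [coeff_single, Finsupp.single_eq_of_ne]
  rintro rfl
  omega

theorem weightGE_mono (h : M ≤ N) : weightGE k w N ≤ weightGE k w M :=
  AddMonoidAlgebra.supported_mono fun _ hn => le_trans h hn

theorem mul_mem_weightGE (hs : s ∈ weightGE k w M) (ht : t ∈ weightGE k w N) :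
    s * t ∈ weightGE k w (M + N) := by
  classical
  rw [weightGE, AddMonoidAlgebra.mem_supported] at *
  intro n hn
  obtain ⟨i, hi, j, hj, rfl⟩ := Finset.mem_add.1 (support_coeff_mul_subset s t hn)
  have h1 := hs hi
  have h2 := ht hj
  simp only [Set.mem_ofPred_eq, map_add] at *
  omega

theorem exists_mem_weightGE (s : AddMonoidAlgebra k Γ) : ∃ M, s ∈ weightGE k w M := by
  induction s using AddMonoidAlgebra.induction_linear with
  | zero => exact ⟨0, zero_mem _⟩
  | add s t hs ht =>
    obtain ⟨M, hM⟩ := hs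
    obtain ⟨N, hN⟩ := ht
    exact ⟨min M N, add_mem (weightGE_mono (min_le_left _ _) hM)
      (weightGE_mono (min_le_right _ _) hN)⟩
  | single n c => exact ⟨w n, single_mem_weightGE le_rfl⟩

theorem weightGE_le_of_single_mem {W : Submodule k (AddMonoidAlgebra k Γ)}
    (h : ∀ n, M ≤ w n → single n 1 ∈ W) : weightGE k w M ≤ W := by
  rw [weightGE, AddMonoidAlgebra.supported_eq_span_single, Submodule.span_le]
  rintro _ ⟨n, hn, rfl⟩
  exact h n hn

theorem initial_mem_weightGE (hF : F - single u 1 ∈ weightGE k w (w u + 1)) :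
    F ∈ weightGE k w (w u) := by
  rw [← sub_add_cancel F (single u 1)]
  exact add_mem (weightGE_mono (by omega) hF) (single_mem_weightGE le_rfl)

/-- The coefficient of `s * F` in lowest possible weight only sees the initial term of `F`. -/
theorem coeff_mul_initial (hF : F - single u 1 ∈ weightGE k w (w u + 1))
    (hs : s ∈ weightGE k w M) (hn : w n ≤ M + w u) :
    (s * F).coeff n = (s * single u 1).coeff n := by
  have h := mem_weightGE.1 (mul_mem_weightGE hs hF) n (by omega)
  rw [mul_sub, coeff_sub, Finsupp.sub_apply, sub_eq_zero] at h
  exact h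

theorem weightGE_le_stairs_sup (hF : F - single u 1 ∈ weightGE k w (w u + 1))
    (hG : G - single v 1 ∈ weightGE k w (w v + 1)) (d : ℕ) :
    weightGE k w (M - d) ≤ AddMonoidAlgebra.supported k k (stairs u v) ⊔
      ((Ideal.span {F, G}).restrictScalars k ⊔ weightGE k w M) := by
  induction d with
  | zero => simpa using le_sup_of_le_right le_sup_right
  | succ d ih =>
    set W := AddMonoidAlgebra.supported k k (stairs u v) ⊔
      ((Ideal.span {F, G}).restrictScalars k ⊔ weightGE k w M)
    have key : ∀ (H : AddMonoidAlgebra k Γ) (c e : Γ), H ∈ Ideal.span {F, G} →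
        H - single c 1 ∈ weightGE k w (w c + 1) → M - (d + 1 : ℕ) ≤ w (c + e) →
        single (c + e) 1 ∈ W := by
      intro H c e hH hc hw
      have h1 : single e 1 * H ∈ W := by
        apply Submodule.mem_sup_right
        apply Submodule.mem_sup_left
        exact Ideal.mul_mem_left _ _ hH
      have h2 : single e 1 * (H - single c 1) ∈ W := by
        apply ih
        refine weightGE_mono ?_ (mul_mem_weightGE (single_mem_weightGE (M := w e) le_rfl) hc)
        push_cast at hw
        rw [map_add] at hw
        omega
      have h3 : single (c + e) (1 : k) = single e 1 * H - single e 1 * (H - single c 1) := by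
        rw [mul_sub, sub_sub_cancel, single_mul_single, one_mul, add_comm]
      rw [h3]
      exact sub_mem h1 h2
    refine weightGE_le_of_single_mem fun n hn => ?_
    by_cases hu : ∃ e, n = u + e
    · obtain ⟨e, rfl⟩ := hu
      exact key F u e (Ideal.subset_span (by simp)) hF hn
    by_cases hv : ∃ e, n = v + e
    · obtain ⟨e, rfl⟩ := hv
      exact key G v e (Ideal.subset_span (by simp)) hG hn
    apply Submodule.mem_sup_left
    rw [AddMonoidAlgebra.supported_eq_span_single]
    exact Submodule.subset_span ⟨n, ⟨hu, hv⟩, rfl⟩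

/-- Division with remainder by `F` and `G`. -/
theorem stairs_sup_eq_top (hF : F - single u 1 ∈ weightGE k w (w u + 1))
    (hG : G - single v 1 ∈ weightGE k w (w v + 1)) :
    AddMonoidAlgebra.supported k k (stairs u v) ⊔
      ((Ideal.span {F, G}).restrictScalars k ⊔ weightGE k w M) = ⊤ := by
  rw [eq_top_iff]
  rintro s -
  obtain ⟨N, hN⟩ := exists_mem_weightGE (w := w) s
  exact weightGE_le_stairs_sup hF hG (M - N).toNat (weightGE_mono (by omega) hN)

theorem eq_zero_of_eq_mul_add_mul_add (huv : ∀ n, (∃ d, n + u = v + d) → ∃ d, n = v + d)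
    (hF : F - single u 1 ∈ weightGE k w (w u + 1))
    (hG : G - single v 1 ∈ weightGE k w (w v + 1))
    (hM : ∀ n ∈ stairs u v, w n < M)
    (hr : r ∈ AddMonoidAlgebra.supported k k (stairs u v)) (ht : t ∈ weightGE k w M) (d : ℕ) :
    ∀ p q, p ∈ weightGE k w (M - d - w u) → q ∈ weightGE k w (M - d - w v) →
      r = p * F + q * G + t → r = 0 := by
  have hF' := initial_mem_weightGE hF
  have hG' := initial_mem_weightGE hG
  have hru : ∀ n, r.coeff (n + u) = 0 := fun n =>
    AddMonoidAlgebra.mem_supported'.1 hr _ fun h => h.1 ⟨n, add_comm _ _⟩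
  have hrv : ∀ n, r.coeff (n + v) = 0 := fun n =>
    AddMonoidAlgebra.mem_supported'.1 hr _ fun h => h.2 ⟨n, add_comm _ _⟩
  induction d with
  | zero =>
    intro p q hp hq h
    have hrM : r ∈ weightGE k w M := by
      rw [h]
      refine add_mem (add_mem ?_ ?_) ht
      · simpa using mul_mem_weightGE hp hF'
      · simpa using mul_mem_weightGE hq hG'
    ext n
    by_cases hn : n ∈ stairs u v
    · exact mem_weightGE.1 hrM n (hM n hn)
    · exact AddMonoidAlgebra.mem_supported'.1 hr n hn
  | succ d ih =>
    intro p q hp hq h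
    push_cast at hp hq
    set m := p.divOf v with hm
    have hmw : m ∈ weightGE k w (M - d - 1 - w u - w v) := by
      rw [mem_weightGE] at hp ⊢
      intro n hn
      rw [hm, coeff_divOf]
      apply hp
      rw [map_add]
      omega
    have hmod : p - m * single v 1 = p.modOf v := by
      rw [sub_eq_iff_eq_add, mul_comm]
      exact (modOf_add_divOf p v).symm
    have hmodw : p.modOf v ∈ weightGE k w (M - d - w u) := by
      rw [mem_weightGE]
      intro n hn
      by_cases hv : ∃ e, n = v + e
      · exact coeff_modOf_of_exists_add _ _ _ hv
      rw [coeff_modOf_of_not_exists_add _ _ _ hv]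
      by_cases hn' : w n < M - (d + 1) - w u
      · exact mem_weightGE.1 hp n hn'
      have h0 := hru n
      rw [h, coeff_add, coeff_add, Finsupp.add_apply, Finsupp.add_apply,
        mem_weightGE.1 ht (n + u) (by rw [map_add]; omega),
        coeff_mul_initial hF hp (by rw [map_add]; omega),
        coeff_mul_initial hG hq (by rw [map_add]; omega), coeff_mul_single_add,
        coeff_mul_single_of_forall_add_ne] at h0
      · simpa using h0
      · intro e he
        exact hv (huv n ⟨e, by rw [← he, add_comm]⟩)
    have hp' : p - m * G ∈ weightGE k w (M - d - w u) := by
      have : p - m * G = p.modOf v - m * (G - single v 1) := by rw [← hmod]; ring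
      rw [this]
      refine sub_mem hmodw (weightGE_mono ?_ (mul_mem_weightGE hmw hG))
      omega
    have hq' : q + m * F ∈ weightGE k w (M - (d + 1) - w v) := by
      refine add_mem hq (weightGE_mono ?_ (mul_mem_weightGE hmw hF'))
      omega
    have h' : r = (p - m * G) * F + (q + m * F) * G + t := by rw [h]; ring
    refine ih _ _ hp' ?_ h'
    rw [mem_weightGE]
    intro n hn
    by_cases hn' : w n < M - (d + 1) - w v
    · exact mem_weightGE.1 hq' n hn'
    have h0 := hrv n
    rw [h', coeff_add, coeff_add, Finsupp.add_apply, Finsupp.add_apply,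
      mem_weightGE.1 ht (n + v) (by rw [map_add]; omega),
      mem_weightGE.1 (mul_mem_weightGE hp' hF') (n + v) (by rw [map_add]; omega),
      coeff_mul_initial hG hq' (by rw [map_add]; omega), coeff_mul_single_add] at h0
    simpa using h0

theorem stairs_isCompl (huv : ∀ n, (∃ d, n + u = v + d) → ∃ d, n = v + d)
    (hF : F - single u 1 ∈ weightGE k w (w u + 1))
    (hG : G - single v 1 ∈ weightGE k w (w v + 1)) (hM : ∀ n ∈ stairs u v, w n < M) :
    IsCompl (AddMonoidAlgebra.supported k k (stairs u v))
      ((Ideal.span {F, G}).restrictScalars k ⊔ weightGE k w M) := by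
  refine ⟨Submodule.disjoint_def.2 fun r hr hr' => ?_,
    codisjoint_iff.2 (stairs_sup_eq_top hF hG)⟩
  obtain ⟨s, hs, t, ht, rfl⟩ := Submodule.mem_sup.1 hr'
  obtain ⟨p, q, rfl⟩ := Ideal.mem_span_pair.1 hs
  obtain ⟨P, hP⟩ := exists_mem_weightGE (w := w) p
  obtain ⟨Q, hQ⟩ := exists_mem_weightGE (w := w) q
  refine eq_zero_of_eq_mul_add_mul_add huv hF hG hM hr ht
    (max (M - w u - P) (M - w v - Q)).toNat p q ?_ ?_ rfl
  · exact weightGE_mono (by omega) hP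
  · exact weightGE_mono (by omega) hQ

/-- The ideal generated by `F`, `G` and all high weights does not depend on the truncation level. -/
theorem span_sup_weightGE_eq (huv : ∀ n, (∃ d, n + u = v + d) → ∃ d, n = v + d)
    (hF : F - single u 1 ∈ weightGE k w (w u + 1))
    (hG : G - single v 1 ∈ weightGE k w (w v + 1)) (hM : ∀ n ∈ stairs u v, w n < M)
    (hMN : M ≤ N) :
    (Ideal.span {F, G}).restrictScalars k ⊔ weightGE k w M =
      (Ideal.span {F, G}).restrictScalars k ⊔ weightGE k w N :=
  (eq_of_le_of_inf_le_of_sup_le (z := AddMonoidAlgebra.supported k k (stairs u v))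
    (sup_le_sup_left (weightGE_mono hMN) _)
    (by
      rw [inf_comm, (stairs_isCompl huv hF hG hM).inf_eq_bot]
      exact bot_le)
    (by
      rw [sup_comm _ (AddMonoidAlgebra.supported k k (stairs u v)),
        sup_comm _ (AddMonoidAlgebra.supported k k (stairs u v)),
        stairs_sup_eq_top hF hG, stairs_sup_eq_top hF hG])).symm

theorem finrank_quotient_eq_ncard_stairs
    (huv : ∀ n, (∃ d, n + u = v + d) → ∃ d, n = v + d)
    (hF : F - single u 1 ∈ weightGE k w (w u + 1))
    (hG : G - single v 1 ∈ weightGE k w (w v + 1)) (hM : ∀ n ∈ stairs u v, w n < M)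
    (hfin : (stairs u v).Finite) (L : Ideal (AddMonoidAlgebra k Γ))
    (hL : L.restrictScalars k = (Ideal.span {F, G}).restrictScalars k ⊔ weightGE k w M) :
    Module.Finite k (AddMonoidAlgebra k Γ ⧸ L) ∧
      Module.finrank k (AddMonoidAlgebra k Γ ⧸ L) = (stairs u v).ncard := by
  have hc := (stairs_isCompl huv hF hG hM).symm
  rw [← hL] at hc
  have := hfin.fintype
  let e : (AddMonoidAlgebra k Γ ⧸ L) ≃ₗ[k] (stairs u v →₀ k) :=
    (Submodule.Quotient.restrictScalarsEquiv k L).symm ≪≫ₗ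
      Submodule.quotientEquivOfIsCompl _ _ hc ≪≫ₗ
      AddMonoidAlgebra.supportedEquivFinsupp _
  refine ⟨Module.Finite.equiv e.symm, ?_⟩
  rw [e.finrank_eq, Module.finrank_finsupp_self, ← Nat.card_eq_fintype_card,
    Nat.card_coe_set_eq]

end Filtration

/-- The Chinese remainder theorem, counted in dimensions: if `K = ker φ` and `L` are coprime ideals
whose intersection is `I`, then `dim S ⧸ I = dim Q + dim S ⧸ L`. -/
theorem finrank_quotient_eq_add_of_isCoprime {k S Q : Type*} [Field k] [CommRing S] [CommRing Q]
    [Algebra k S] [Algebra k Q] (φ : S →ₐ[k] Q) (hφ : Function.Surjective φ) {I L : Ideal S}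
    [Module.Finite k (S ⧸ I)] (hIK : I ≤ RingHom.ker φ) (hIL : I ≤ L)
    (hKL : IsCoprime (RingHom.ker φ) L) (h : RingHom.ker φ * L ≤ I) :
    Module.finrank k (S ⧸ I) = Module.finrank k Q + Module.finrank k (S ⧸ L) := by
  have hI : I = RingHom.ker φ ⊓ L :=
    le_antisymm (le_inf hIK hIL) (by rwa [← Ideal.mul_eq_inf_of_isCoprime hKL])
  have : Module.Finite k (S ⧸ RingHom.ker φ) :=
    Module.Finite.of_surjective (Ideal.Quotient.factorₐ k hIK).toLinearMap
      (Ideal.Quotient.factor_surjective hIK)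
  have : Module.Finite k (S ⧸ L) :=
    Module.Finite.of_surjective (Ideal.Quotient.factorₐ k hIL).toLinearMap
      (Ideal.Quotient.factor_surjective hIL)
  let ψ : (S ⧸ RingHom.ker φ ⊓ L) →ₗ[k] (S ⧸ RingHom.ker φ) × (S ⧸ L) :=
    (Ideal.Quotient.factorₐ k inf_le_left).toLinearMap.prod
      (Ideal.Quotient.factorₐ k inf_le_right).toLinearMap
  have hψ : Function.Bijective ψ := by
    convert (Ideal.quotientInfEquivQuotientProd _ L hKL).bijective using 1
    ext x <;> obtain ⟨x, rfl⟩ := Ideal.Quotient.mk_surjective x <;> rfl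
  rw [hI, (LinearEquiv.ofBijective ψ hψ).finrank_eq, Module.finrank_prod,
    (Ideal.quotientKerAlgEquivOfSurjective hφ).toLinearEquiv.finrank_eq]

/-- In a finite-dimensional image, the inverse of an element of the image is in the image. -/
theorem mem_range_of_mul_eq_one {k S Q : Type*} [Field k] [CommRing S] [CommRing Q]
    [Algebra k S] [Algebra k Q] (φ : S →ₐ[k] Q) [Module.Finite k φ.range] {x : S} {y : Q}
    (h : φ x * y = 1) : y ∈ φ.range := by
  let m : φ.range →ₗ[k] φ.range := LinearMap.mulLeft k (⟨φ x, x, rfl⟩ : φ.range)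
  have hm : Function.Injective m := by
    rw [injective_iff_map_eq_zero]
    intro z hz
    have hz' : φ x * z = 0 := congrArg Subtype.val hz
    ext
    calc (z : Q) = (φ x * y) * z := by rw [h, one_mul]
      _ = y * (φ x * z) := by ring
      _ = 0 := by rw [hz', mul_zero]
  obtain ⟨z, hz⟩ := LinearMap.injective_iff_surjective.1 hm 1
  have hz' : φ x * z = 1 := congrArg Subtype.val hz
  have : y = z := by
    calc y = y * (φ x * z) := by rw [hz', mul_one]
      _ = (φ x * y) * z := by ring
      _ = z := by rw [h, one_mul]
  rw [this]
  exact z.2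

theorem pow_mul_eq_zero_of_pow_eq {A : Type*} [CommRing A] {X Y c κ : A} {a β N : ℕ} (hβ : 1 ≤ β)
    (h : X ^ a = Y ^ β * c) (hκ : (X * Y) ^ N * κ = 0) : X ^ (N + a * N) * κ = 0 := by
  obtain ⟨β, rfl⟩ := Nat.exists_eq_add_of_le hβ
  calc X ^ (N + a * N) * κ = X ^ N * (X ^ a) ^ N * κ := by rw [pow_add, pow_mul]
    _ = ((X * Y) ^ N * κ) * (Y ^ β * c) ^ N := by rw [h]; ring
    _ = 0 := by rw [hκ, zero_mul]

/-- The ideal of elements all of whose monomials have weight at least `M`. -/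
def weightIdeal (k : Type*) {Γ : Type*} [Field k] [AddCancelCommMonoid Γ] (w : Γ →+ ℤ)
    (hw : ∀ n, 0 ≤ w n) (M : ℤ) : Ideal (AddMonoidAlgebra k Γ) where
  __ := weightGE k w M
  smul_mem' s t ht := by
    have hs : s ∈ weightGE k w 0 := mem_weightGE.2 fun n hn => absurd (hw n) (not_le.2 hn)
    simpa using mul_mem_weightGE hs ht

theorem mem_weightIdeal {k Γ : Type*} [Field k] [AddCancelCommMonoid Γ] {w : Γ →+ ℤ}
    {hw : ∀ n, 0 ≤ w n} {M : ℤ} {s : AddMonoidAlgebra k Γ} :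
    s ∈ weightIdeal k w hw M ↔ s ∈ weightGE k w M := Iff.rfl

/-- The weight `x^i y^j ↦ c * i + e * j`. -/
def planeWeight (c e : ℤ) : ℕ × ℕ →+ ℤ where
  toFun n := c * n.1 + e * n.2
  map_zero' := by simp
  map_add' m n := by push_cast [Prod.fst_add, Prod.snd_add]; ring

theorem planeWeight_apply (c e : ℤ) (n : ℕ × ℕ) : planeWeight c e n = c * n.1 + e * n.2 := rfl

theorem stairs_axes (c e : ℕ) :
    stairs ((c, 0) : ℕ × ℕ) (0, e) = ↑(Finset.range c ×ˢ Finset.range e) := by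
  ext ⟨i, j⟩
  simp only [stairs, Set.mem_ofPred_eq, Finset.coe_product, Finset.coe_range, Set.mem_prod,
    Set.mem_Iio, Prod.exists, Prod.mk_add_mk, Prod.mk.injEq, zero_add]
  constructor
  · rintro ⟨h1, h2⟩
    constructor
    · by_contra h
      exact h1 ⟨i - c, j, by omega, rfl⟩
    · by_contra h
      exact h2 ⟨i, j - e, rfl, by omega⟩
  · rintro ⟨h1, h2⟩
    exact ⟨fun ⟨_, _, h, _⟩ => by omega, fun ⟨_, _, _, h⟩ => by omega⟩

theorem stairs_comm {Γ : Type*} [AddCancelCommMonoid Γ] (u v : Γ) : stairs u v = stairs v u := by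
  ext n
  exact and_comm

theorem ncard_stairs_axes (c e : ℕ) : (stairs ((c, 0) : ℕ × ℕ) (0, e)).ncard = c * e := by
  rw [stairs_axes, Set.ncard_coe_finset, Finset.card_product, Finset.card_range, Finset.card_range]

section Link

/-- The polynomial ring `F₂[x, y]`. -/
abbrev PolyS : Type := AddMonoidAlgebra (ZMod 2) (ℕ × ℕ)

/-- The monomial `x^i y^j` of the polynomial ring. -/
def polyMono (i j : ℕ) : PolyS := AddMonoidAlgebra.single (i, j) 1

/-- The numerator `x^α + x^{α+1} + y^b` of `f`. -/
def fNum (α b : ℕ) : PolyS := polyMono α 0 + polyMono (α + 1) 0 + polyMono 0 b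

/-- The numerator `y^β + y^{β+1} + x^a` of `g`. -/
def gNum (β a : ℕ) : PolyS := polyMono 0 β + polyMono 0 (β + 1) + polyMono a 0

/-- The inclusion of the polynomial ring in the Laurent polynomial ring. -/
def toLaurent : PolyS →ₐ[ZMod 2] LaurentR :=
  AddMonoidAlgebra.mapDomainAlgHom (ZMod 2) (ZMod 2)
    ((Nat.castAddMonoidHom ℤ).prodMap (Nat.castAddMonoidHom ℤ))

theorem toLaurent_polyMono (i j : ℕ) : toLaurent (polyMono i j) = mono i j := by
  simp [toLaurent, polyMono, mono]

theorem toLaurent_injective : Function.Injective toLaurent := by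
  refine AddMonoidAlgebra.mapDomain_injective ?_
  rintro ⟨i, j⟩ ⟨i', j'⟩ h
  simpa using h

theorem mono_mul_mono (i j i' j' : ℤ) : mono i j * mono i' j' = mono (i + i') (j + j') := by
  simp [mono, AddMonoidAlgebra.single_mul_single]

theorem mono_zero : mono 0 0 = 1 := rfl

theorem polyMono_mul_polyMono (i j i' j' : ℕ) :
    polyMono i j * polyMono i' j' = polyMono (i + i') (j + j') := by
  simp [polyMono, AddMonoidAlgebra.single_mul_single]

theorem polyMono_pow (i j N : ℕ) : polyMono i j ^ N = polyMono (N * i) (N * j) := by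
  simp [polyMono, AddMonoidAlgebra.single_pow]

theorem toLaurent_fNum (α b : ℕ) : toLaurent (fNum α b) = mono α 0 * fBB α b := by
  simp [fNum, fBB, toLaurent_polyMono, mul_add, mono_mul_mono]

theorem toLaurent_gNum (β a : ℕ) : toLaurent (gNum β a) = mono 0 β * gBB β a := by
  simp [gNum, gBB, toLaurent_polyMono, mul_add, mono_mul_mono]

theorem exists_toLaurent_eq_mono_mul (p : LaurentR) :
    ∃ N : ℕ, ∀ N' : ℕ, N ≤ N' → ∃ s, toLaurent s = mono N' N' * p := by
  induction p using AddMonoidAlgebra.induction_linear with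
  | zero => exact ⟨0, fun N' _ => ⟨0, by simp⟩⟩
  | add p q hp hq =>
    obtain ⟨M, hM⟩ := hp
    obtain ⟨N, hN⟩ := hq
    refine ⟨max M N, fun N' h => ?_⟩
    obtain ⟨s, hs⟩ := hM N' (le_trans (le_max_left _ _) h)
    obtain ⟨t, ht⟩ := hN N' (le_trans (le_max_right _ _) h)
    exact ⟨s + t, by rw [map_add, hs, ht, mul_add]⟩
  | single n c =>
    obtain ⟨i, j⟩ := n
    refine ⟨max i.natAbs j.natAbs, fun N' h => ?_⟩
    refine ⟨AddMonoidAlgebra.single ((N' + i).toNat, (N' + j).toNat) c, ?_⟩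
    have h1 : max (N' + i) 0 = N' + i := by omega
    have h2 : max (N' + j) 0 = N' + j := by omega
    simp [toLaurent, mono, AddMonoidAlgebra.single_mul_single, h1, h2]

/-- The polynomials in the Laurent ideal are those that a power of `xy` moves into the polynomial
ideal. -/
theorem exists_pow_mul_mem_of_toLaurent_mem {α β a b : ℕ} {s : PolyS}
    (hs : toLaurent s ∈ Ideal.span ({fBB α b, gBB β a} : Set LaurentR)) :
    ∃ N, polyMono 1 1 ^ N * s ∈ Ideal.span ({fNum α b, gNum β a} : Set PolyS) := by
  obtain ⟨p, q, h⟩ := Ideal.mem_span_pair.1 hs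
  obtain ⟨M, hM⟩ := exists_toLaurent_eq_mono_mul (p * mono (-α) 0)
  obtain ⟨N, hN⟩ := exists_toLaurent_eq_mono_mul (q * mono 0 (-β))
  obtain ⟨p', hp'⟩ := hM (max M N) (le_max_left _ _)
  obtain ⟨q', hq'⟩ := hN (max M N) (le_max_right _ _)
  refine ⟨max M N, Ideal.mem_span_pair.2 ⟨p', q', toLaurent_injective ?_⟩⟩
  have h1 : mono (-α) 0 * mono α 0 = 1 := by rw [mono_mul_mono]; simp [mono_zero]
  have h2 : mono 0 (-β) * mono 0 β = 1 := by rw [mono_mul_mono]; simp [mono_zero]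
  rw [map_add, map_mul, map_mul, map_mul, hp', hq', toLaurent_fNum, toLaurent_gNum, ← h,
    polyMono_pow, toLaurent_polyMono, mul_one]
  linear_combination (mono ↑(max M N) ↑(max M N) * p * fBB α b) * h1 +
    (mono ↑(max M N) ↑(max M N) * q * gBB β a) * h2

variable {α β a b : ℕ}

theorem fNum_eq (α b : ℕ) : fNum α b = polyMono 0 b + polyMono α 0 * (1 + polyMono 1 0) := by
  rw [mul_add, polyMono_mul_polyMono, fNum, mul_one, add_zero]; ring

theorem gNum_eq (β a : ℕ) : gNum β a = polyMono a 0 + polyMono 0 β * (1 + polyMono 0 1) := by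
  rw [mul_add, polyMono_mul_polyMono, gNum, mul_one, add_zero]; ring

/-- An element killed by a power of `xy` modulo the ideal is killed by powers of `x` and of `y`. -/
theorem exists_polyMono_mul_mem (hα : 1 ≤ α) (hβ : 1 ≤ β) {s : PolyS} {N : ℕ}
    (hs : polyMono 1 1 ^ N * s ∈ Ideal.span ({fNum α b, gNum β a} : Set PolyS)) :
    ∃ P, polyMono P 0 * s ∈ Ideal.span ({fNum α b, gNum β a} : Set PolyS) ∧
      polyMono 0 P * s ∈ Ideal.span ({fNum α b, gNum β a} : Set PolyS) := by
  set I := Ideal.span ({fNum α b, gNum β a} : Set PolyS)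
  let π := Ideal.Quotient.mk I
  have hx : ∀ i, polyMono i 0 = polyMono 1 0 ^ i := fun i => by rw [polyMono_pow]; simp
  have hy : ∀ i, polyMono 0 i = polyMono 0 1 ^ i := fun i => by rw [polyMono_pow]; simp
  have hxy : polyMono 1 1 = polyMono 1 0 * polyMono 0 1 := by rw [polyMono_mul_polyMono]
  have hF : π (fNum α b) = 0 := Ideal.Quotient.eq_zero_iff_mem.2 (Ideal.subset_span (by simp))
  have hG : π (gNum β a) = 0 := Ideal.Quotient.eq_zero_iff_mem.2 (Ideal.subset_span (by simp))
  have hs' : (π (polyMono 1 0) * π (polyMono 0 1)) ^ N * π s = 0 := by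
    rw [← map_mul, ← hxy, ← map_pow, ← map_mul]
    exact Ideal.Quotient.eq_zero_iff_mem.2 hs
  rw [fNum_eq, map_add, map_mul, hx, hy, map_pow, map_pow] at hF
  rw [gNum_eq, map_add, map_mul, hx, hy, map_pow, map_pow] at hG
  have h1 := pow_mul_eq_zero_of_pow_eq (a := a) hβ
    (c := -π (1 + polyMono 0 1)) (by linear_combination hG) hs'
  rw [mul_comm (π (polyMono 1 0))] at hs'
  have h2 := pow_mul_eq_zero_of_pow_eq (a := b) hα
    (c := -π (1 + polyMono 1 0)) (by linear_combination hF) hs'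
  rw [← map_pow, ← map_mul, Ideal.Quotient.eq_zero_iff_mem, polyMono_pow] at h1 h2
  refine ⟨N + a * N + (N + b * N), ?_, ?_⟩
  · convert I.mul_mem_left (polyMono (N + b * N) 0) h1 using 1
    rw [← mul_assoc, polyMono_mul_polyMono]
    congr 2; ring
  · convert I.mul_mem_left (polyMono 0 (N + a * N)) h2 using 1
    rw [← mul_assoc, polyMono_mul_polyMono]
    congr 2; ring

/-- If `x^P s` and `y^P s` lie in an ideal, so does every multiple of `s` of high weight. -/
theorem mul_mem_of_mem_weightGE {c e : ℤ} (hc : 0 < c) (he : 0 < e) {I : Ideal PolyS} {s t : PolyS}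
    {P : ℕ} (hx : polyMono P 0 * s ∈ I) (hy : polyMono 0 P * s ∈ I)
    (ht : t ∈ weightGE (ZMod 2) (planeWeight c e) ((c + e) * P)) : t * s ∈ I := by
  let W : Submodule (ZMod 2) PolyS :=
    (I.restrictScalars (ZMod 2)).comap (LinearMap.mulRight (ZMod 2) s)
  suffices weightGE (ZMod 2) (planeWeight c e) ((c + e) * P) ≤ W from this ht
  refine weightGE_le_of_single_mem ?_
  rintro ⟨i, j⟩ hn
  change polyMono i j * s ∈ I
  rw [planeWeight_apply] at hn
  rcases le_or_gt P i with h | h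
  · convert I.mul_mem_left (polyMono (i - P) j) hx using 1
    rw [← mul_assoc, polyMono_mul_polyMono]
    congr 2; omega
  · have h' : P ≤ j := by
      by_contra hj
      have h3 : c * i < c * P := by gcongr
      have h4 : e * j < e * P := by gcongr; omega
      dsimp only at hn
      linarith
    convert I.mul_mem_left (polyMono i (j - P)) hy using 1
    rw [← mul_assoc, polyMono_mul_polyMono]
    congr 2; omega

theorem surjective_mkₐ_comp_toLaurent (J : Ideal LaurentR) {I : Ideal PolyS}
    [Module.Finite (ZMod 2) (PolyS ⧸ I)]
    (hI : I ≤ RingHom.ker ((Ideal.Quotient.mkₐ (ZMod 2) J).comp toLaurent)) :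
    Function.Surjective ((Ideal.Quotient.mkₐ (ZMod 2) J).comp toLaurent) := by
  set φ := (Ideal.Quotient.mkₐ (ZMod 2) J).comp toLaurent with hφ
  have hfin : Module.Finite (ZMod 2) φ.range := by
    have : Module.Finite (ZMod 2) (PolyS ⧸ RingHom.ker φ) :=
      Module.Finite.of_surjective (Ideal.Quotient.factorₐ (ZMod 2) hI).toLinearMap
        (Ideal.Quotient.factor_surjective hI)
    exact Module.Finite.equiv (Ideal.quotientKerEquivRange φ).toLinearEquiv
  have hpoly : ∀ i j, φ (polyMono i j) = Ideal.Quotient.mkₐ (ZMod 2) J (mono i j) := fun i j => by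
    rw [hφ, AlgHom.comp_apply, toLaurent_polyMono]
  have hneg : ∀ i j : ℕ, Ideal.Quotient.mkₐ (ZMod 2) J (mono (-i) (-j)) ∈ φ.range := fun i j => by
    refine mem_range_of_mul_eq_one φ (x := polyMono i j) ?_
    rw [hpoly, ← map_mul, mono_mul_mono]
    simp [mono_zero]
  have hmono : ∀ i j, Ideal.Quotient.mkₐ (ZMod 2) J (mono i j) ∈ φ.range := fun i j => by
    have h : mono i j = mono i.toNat j.toNat * mono (-(-i).toNat) (-(-j).toNat) := by
      rw [mono_mul_mono]
      congr 1 <;> omega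
    rw [h, map_mul, ← hpoly]
    exact mul_mem ⟨_, rfl⟩ (hneg _ _)
  intro z
  obtain ⟨p, rfl⟩ := Ideal.Quotient.mkₐ_surjective (ZMod 2) J z
  change _ ∈ φ.range
  induction p using AddMonoidAlgebra.induction_linear with
  | zero => rw [map_zero]; exact zero_mem _
  | add p q hp hq => rw [map_add]; exact add_mem hp hq
  | single n r =>
    have h : AddMonoidAlgebra.single n r = r • mono n.1 n.2 := by
      simp [mono]
    rw [h, map_smul]
    exact Subalgebra.smul_mem _ (hmono _ _) _

theorem span_num_le_ker :
    Ideal.span ({fNum α b, gNum β a} : Set PolyS) ≤ RingHom.ker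
      ((Ideal.Quotient.mkₐ (ZMod 2)
        (Ideal.span ({fBB α b, gBB β a} : Set LaurentR))).comp toLaurent) := by
  rw [Ideal.span_le]
  rintro s (rfl | rfl)
  · refine Ideal.Quotient.eq_zero_iff_mem.2 ?_
    change toLaurent _ ∈ _
    rw [toLaurent_fNum]
    exact Ideal.mul_mem_left _ _ (Ideal.subset_span (by simp))
  · refine Ideal.Quotient.eq_zero_iff_mem.2 ?_
    change toLaurent _ ∈ _
    rw [toLaurent_gNum]
    exact Ideal.mul_mem_left _ _ (Ideal.subset_span (by simp))

theorem polyMono_mem_weightGE {c e M : ℤ} {i j : ℕ} (h : M ≤ c * i + e * j) :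
    polyMono i j ∈ weightGE (ZMod 2) (planeWeight c e) M :=
  single_mem_weightGE h

/-- The affine intersection number of the two curves. -/
theorem finrank_quotient_span_num {c e : ℤ} (hc : 0 < c) (he : 0 < e)
    (h1 : (α + 1) * c < b * e) (h2 : (β + 1) * e < a * c) :
    Module.Finite (ZMod 2) (PolyS ⧸ Ideal.span ({fNum α b, gNum β a} : Set PolyS)) ∧
      Module.finrank (ZMod 2) (PolyS ⧸ Ideal.span ({fNum α b, gNum β a} : Set PolyS)) = a * b := by
  have hbot : weightGE (ZMod 2) (planeWeight (-c) (-e)) 1 = ⊥ := by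
    rw [eq_bot_iff]
    intro s hs
    ext n
    refine mem_weightGE.1 hs n ?_
    rw [planeWeight_apply]
    have : 0 ≤ c * n.1 := by positivity
    have : 0 ≤ e * n.2 := by positivity
    linarith
  rw [← ncard_stairs_axes a b, stairs_comm]
  refine finrank_quotient_eq_ncard_stairs (w := planeWeight (-c) (-e)) (M := 1)
    (F := fNum α b) (G := gNum β a) ?_ ?_ ?_ ?_ ?_ _ ?_
  · rintro ⟨i, j⟩ ⟨⟨d, d'⟩, h⟩
    simp only [Prod.mk_add_mk, Prod.mk.injEq] at h
    exact ⟨(d, j), by simp; omega⟩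
  · have : fNum α b - AddMonoidAlgebra.single (0, b) 1 = polyMono α 0 + polyMono (α + 1) 0 := by
      rw [fNum, polyMono, polyMono, polyMono]; ring
    rw [this, planeWeight_apply]
    refine add_mem (polyMono_mem_weightGE ?_) (polyMono_mem_weightGE ?_) <;> push_cast <;> nlinarith
  · have : gNum β a - AddMonoidAlgebra.single (a, 0) 1 = polyMono 0 β + polyMono 0 (β + 1) := by
      rw [gNum, polyMono, polyMono, polyMono]; ring
    rw [this, planeWeight_apply]
    refine add_mem (polyMono_mem_weightGE ?_) (polyMono_mem_weightGE ?_) <;> push_cast <;> nlinarith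
  · intro n _
    rw [planeWeight_apply]
    have : 0 ≤ c * n.1 := by positivity
    have : 0 ≤ e * n.2 := by positivity
    linarith
  · rw [stairs_comm, stairs_axes]
    exact Finset.finite_toSet _
  · rw [hbot, sup_bot_eq]

theorem planeWeight_nonneg {c e : ℤ} (hc : 0 < c) (he : 0 < e) (n : ℕ × ℕ) :
    0 ≤ planeWeight c e n := by
  rw [planeWeight_apply]
  positivity

/-- The local intersection number of the two curves at the origin, together with the independence
of the truncation level. -/
theorem finrank_quotient_local {c e : ℤ} (hc : 0 < c) (he : 0 < e)
    (h1 : (α + 1) * c < b * e) (h2 : (β + 1) * e < a * c) :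
    Module.finrank (ZMod 2) (PolyS ⧸ (Ideal.span ({fNum α b, gNum β a} : Set PolyS) ⊔
        weightIdeal (ZMod 2) (planeWeight c e) (planeWeight_nonneg hc he) (c * α + e * β))) =
          α * β ∧
      ∀ N, c * α + e * β ≤ N → ∀ s ∈ weightGE (ZMod 2) (planeWeight c e) (c * α + e * β),
        ∃ r ∈ Ideal.span ({fNum α b, gNum β a} : Set PolyS),
          ∃ t ∈ weightGE (ZMod 2) (planeWeight c e) N, r + t = s := by
  have huv : ∀ n : ℕ × ℕ, (∃ d, n + (α, 0) = (0, β) + d) → ∃ d, n = (0, β) + d := by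
    rintro ⟨i, j⟩ ⟨⟨d, d'⟩, h⟩
    simp only [Prod.mk_add_mk, Prod.mk.injEq] at h
    exact ⟨(i, d'), by simp; omega⟩
  have hF : fNum α b - AddMonoidAlgebra.single (α, 0) 1 ∈
      weightGE (ZMod 2) (planeWeight c e) (planeWeight c e (α, 0) + 1) := by
    have : fNum α b - AddMonoidAlgebra.single (α, 0) 1 = polyMono (α + 1) 0 + polyMono 0 b := by
      rw [fNum, polyMono, polyMono, polyMono]; ring
    rw [this, planeWeight_apply]
    refine add_mem (polyMono_mem_weightGE ?_) (polyMono_mem_weightGE ?_) <;> push_cast <;> nlinarith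
  have hG : gNum β a - AddMonoidAlgebra.single (0, β) 1 ∈
      weightGE (ZMod 2) (planeWeight c e) (planeWeight c e (0, β) + 1) := by
    have : gNum β a - AddMonoidAlgebra.single (0, β) 1 = polyMono 0 (β + 1) + polyMono a 0 := by
      rw [gNum, polyMono, polyMono, polyMono]; ring
    rw [this, planeWeight_apply]
    refine add_mem (polyMono_mem_weightGE ?_) (polyMono_mem_weightGE ?_) <;> push_cast <;> nlinarith
  have hM : ∀ n ∈ stairs ((α, 0) : ℕ × ℕ) (0, β), planeWeight c e n < c * α + e * β := by
    intro n hn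
    rw [stairs_axes] at hn
    simp only [Finset.coe_product, Finset.coe_range, Set.mem_prod, Set.mem_Iio] at hn
    rw [planeWeight_apply]
    have h3 : c * n.1 < c * α := by gcongr; exact hn.1
    have h4 : e * n.2 < e * β := by gcongr; exact hn.2
    linarith
  constructor
  · rw [← ncard_stairs_axes α β]
    refine (finrank_quotient_eq_ncard_stairs huv hF hG hM ?_ _ ?_).2
    · rw [stairs_axes]
      exact Finset.finite_toSet _
    · ext s
      simp only [Submodule.restrictScalars_mem, Submodule.mem_sup, mem_weightIdeal]
  · intro N hN s hs
    have h : s ∈ (Ideal.span ({fNum α b, gNum β a} : Set PolyS)).restrictScalars (ZMod 2) ⊔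
        weightGE (ZMod 2) (planeWeight c e) N := by
      rw [← span_sup_weightGE_eq huv hF hG hM hN]
      exact Submodule.mem_sup_right hs
    exact Submodule.mem_sup.1 h

theorem finrank_laurent_quotient (hα : 1 ≤ α) (hβ : 1 ≤ β) (hab : (α + 1) * (β + 1) < a * b) :
    Module.finrank (ZMod 2) (LaurentR ⧸ Ideal.span ({fBB α b, gBB β a} : Set LaurentR)) + α * β =
      a * b := by
  obtain ⟨c, hc'⟩ : ∃ c : ℤ, c = b + β + 1 := ⟨_, rfl⟩
  obtain ⟨e, he'⟩ : ∃ e : ℤ, e = a + α + 1 := ⟨_, rfl⟩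
  have hc : 0 < c := by omega
  have he : 0 < e := by omega
  zify at hab
  have h1 : (α + 1) * c < b * e := by subst hc' he'; linarith
  have h2 : (β + 1) * e < a * c := by subst hc' he'; linarith
  obtain ⟨hfin, haff⟩ := finrank_quotient_span_num hc he h1 h2
  obtain ⟨hloc, hlevel⟩ := finrank_quotient_local hc he h1 h2
  have hle := span_num_le_ker (α := α) (β := β) (a := a) (b := b)
  have hsurj := surjective_mkₐ_comp_toLaurent _ hle
  rw [← haff, ← hloc]
  refine (finrank_quotient_eq_add_of_isCoprime _ hsurj hle le_sup_left ?_ ?_).symm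
  · obtain ⟨s, hs⟩ := hsurj (Ideal.Quotient.mkₐ (ZMod 2) _ (mono (-1) 0))
    rw [Ideal.isCoprime_iff_exists]
    set P := α + e.toNat * β with hP
    refine ⟨1 - polyMono P 0 * s ^ P, ?_, polyMono P 0 * s ^ P, ?_, by ring⟩
    · rw [RingHom.mem_ker, map_sub, map_one, map_mul, map_pow, hs, AlgHom.comp_apply,
        toLaurent_polyMono, ← map_pow, ← map_mul]
      have : mono P 0 * mono (-1) 0 ^ P = 1 := by
        simp [mono, AddMonoidAlgebra.single_pow, AddMonoidAlgebra.single_mul_single,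
          AddMonoidAlgebra.one_def, Prod.zero_eq_mk]
      simp only [Nat.cast_zero]
      rw [this, map_one, sub_self]
    · refine Ideal.mul_mem_right _ _ (Ideal.mem_sup_right ?_)
      refine polyMono_mem_weightGE ?_
      have h3 : (P : ℤ) = α + e * β := by rw [hP]; push_cast; rw [Int.toNat_of_nonneg he.le]
      rw [h3]
      have h4 : 0 ≤ e * β := by positivity
      have h5 : e * β ≤ c * (e * β) := by nlinarith
      push_cast
      linarith
  · rw [Ideal.mul_le]
    intro κ hκ l hl
    obtain ⟨N, hN⟩ := exists_pow_mul_mem_of_toLaurent_mem (Ideal.Quotient.eq_zero_iff_mem.1 hκ)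
    obtain ⟨P, hx, hy⟩ := exists_polyMono_mul_mem hα hβ hN
    obtain ⟨r, hr, t, ht, rfl⟩ := Submodule.mem_sup.1 hl
    obtain ⟨r', hr', t', ht', rfl⟩ := hlevel _ (le_max_left _ ((c + e) * P)) t ht
    rw [mul_comm, add_mul, add_mul]
    exact add_mem (Ideal.mul_mem_right _ _ hr) (add_mem (Ideal.mul_mem_right _ _ hr')
      (mul_mem_of_mem_weightGE hc he hx hy (weightGE_mono (le_max_right _ _) ht')))

end Link


/-- If `α, β ≥ 1`, `a, b ≥ 0` and `a·b > (α+1)·(β+1)`, the topological index of BB(ᾱ, β̄, a, b) is `Q = a·b − α·β`. -/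
theorem bb_index_regime_top_right (α β a b : ℤ) (hα : 1 ≤ α) (hβ : 1 ≤ β) (ha : 0 ≤ a) (hb : 0 ≤ b) (hab : (α + 1) * (β + 1) < a * b) :
    (Module.finrank (ZMod 2)
      (LaurentR ⧸ Ideal.span ({fBB α b, gBB β a} : Set LaurentR)) : ℤ) = a * b - α * β := by
  lift α to ℕ using by omega
  lift β to ℕ using by omega
  lift a to ℕ using ha
  lift b to ℕ using hb
  have h := finrank_laurent_quotient (α := α) (β := β) (a := a) (b := b) (by omega) (by omega)
    (by exact_mod_cast hab)
  zify at h
  linarith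
end
end

section
/- Let α, β, a, b be integers with α ≥ 1, β ≥ 1, a ≥ 0, b ≥ 0 and α·β < a·b < (α + 1)·(β + 1). Then the topological index of the BB(ᾱ, β̄, a, b) code, with f = 1 + x + x^{-α} y^{b} and g = 1 + y + y^{-β} x^{a} in R, is Q = dim_{F₂} R ⧸ (f, g) = α + β + 1. -/
noncomputable section

namespace BivariateBicycle

open AddMonoidAlgebra

section Triangular

variable {k : Type*} [Field k]

lemma mul_mem_supported {s t r : Set (ℕ × ℕ)} (h : ∀ i ∈ s, ∀ j ∈ t, i + j ∈ r)
    {u v : AddMonoidAlgebra k (ℕ × ℕ)} (hu : u ∈ supported k k s) (hv : v ∈ supported k k t) :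
    u * v ∈ supported k k r := by
  classical
  rw [mem_supported] at *
  intro m hm
  obtain ⟨i, hi, j, hj, rfl⟩ := Finset.mem_add.1 (support_coeff_mul_subset u v hm)
  exact h i (hu hi) j (hv hj)

lemma single_mem_supported {s : Set (ℕ × ℕ)} {i : ℕ × ℕ} (hi : i ∈ s) (r : k) :
    single i r ∈ supported k k s := by
  classical
  rw [mem_supported']
  intro m hm
  rw [coeff_single, Finsupp.single_apply, if_neg]
  rintro rfl
  exact hm hi

/-- `u` is the monomial with exponent `s` plus terms of strictly smaller weight. -/
def HasLead (w : ℕ × ℕ →+ ℤ) (u : AddMonoidAlgebra k (ℕ × ℕ)) (s : ℕ × ℕ) : Prop :=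
  u - single s 1 ∈ supported k k {t | w t < w s}

lemma HasLead.single (w : ℕ × ℕ →+ ℤ) (s : ℕ × ℕ) :
    HasLead (k := k) w (single s 1) s := by
  simp [HasLead]

lemma HasLead.mul {w : ℕ × ℕ →+ ℤ} {u v : AddMonoidAlgebra k (ℕ × ℕ)} {s t : ℕ × ℕ}
    (hu : HasLead w u s) (hv : HasLead w v t) : HasLead w (u * v) (s + t) := by
  have hs : (AddMonoidAlgebra.single s 1 : AddMonoidAlgebra k (ℕ × ℕ)) ∈
      supported k k {i | w i ≤ w s} := single_mem_supported (Set.mem_ofPred_eq ▸ le_rfl) 1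
  have ht : (AddMonoidAlgebra.single t 1 : AddMonoidAlgebra k (ℕ × ℕ)) ∈
      supported k k {i | w i ≤ w t} := single_mem_supported (Set.mem_ofPred_eq ▸ le_rfl) 1
  have key : u * v - AddMonoidAlgebra.single (s + t) 1 =
      (u - AddMonoidAlgebra.single s 1) * (v - AddMonoidAlgebra.single t 1) +
      AddMonoidAlgebra.single s 1 * (v - AddMonoidAlgebra.single t 1) +
      (u - AddMonoidAlgebra.single s 1) * AddMonoidAlgebra.single t 1 := by
    have : (AddMonoidAlgebra.single (s + t) 1 : AddMonoidAlgebra k (ℕ × ℕ)) =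
        AddMonoidAlgebra.single s 1 * AddMonoidAlgebra.single t 1 := by
      rw [single_mul_single, one_mul]
    rw [this]
    ring
  unfold HasLead at *
  rw [key]
  refine add_mem (add_mem ?_ ?_) ?_
  · refine mul_mem_supported (fun i hi j hj => ?_) hu hv
    simp only [Set.mem_ofPred_eq, map_add] at *
    omega
  · refine mul_mem_supported (fun i hi j hj => ?_) hs hv
    simp only [Set.mem_ofPred_eq, map_add] at *
    omega
  · refine mul_mem_supported (fun i hi j hj => ?_) hu ht
    simp only [Set.mem_ofPred_eq, map_add] at *
    omega

lemma HasLead.pow {w : ℕ × ℕ →+ ℤ} {u : AddMonoidAlgebra k (ℕ × ℕ)} {s : ℕ × ℕ}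
    (hu : HasLead w u s) (n : ℕ) : HasLead w (u ^ n) (n • s) := by
  induction n with
  | zero => simpa [one_def] using HasLead.single (k := k) w 0
  | succ n ih => rw [pow_succ, succ_nsmul]; exact ih.mul hu

/-- The linear map sending `x^i y^j` to `F^(i / p) G^(j / q) x^(i % p) y^(j % q)`. -/
noncomputable def adicMap (F G : AddMonoidAlgebra k (ℕ × ℕ)) (p q : ℕ) :
    AddMonoidAlgebra k (ℕ × ℕ) →ₗ[k] AddMonoidAlgebra k (ℕ × ℕ) :=
  (AddMonoidAlgebra.basis (ℕ × ℕ) k).constr k fun s =>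
    F ^ (s.1 / p) * G ^ (s.2 / q) * single (s.1 % p, s.2 % q) 1

lemma adicMap_single (F G : AddMonoidAlgebra k (ℕ × ℕ)) (p q : ℕ) (s : ℕ × ℕ) :
    adicMap F G p q (single s 1) =
      F ^ (s.1 / p) * G ^ (s.2 / q) * single (s.1 % p, s.2 % q) 1 := by
  rw [adicMap, ← AddMonoidAlgebra.basis_apply, Module.Basis.constr_basis]

lemma hasLead_adicMap_single {w : ℕ × ℕ →+ ℤ} {F G : AddMonoidAlgebra k (ℕ × ℕ)} {p q : ℕ}
    (hF : HasLead w F (p, 0)) (hG : HasLead w G (0, q)) (s : ℕ × ℕ) :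
    HasLead w (adicMap F G p q (single s 1)) s := by
  rw [adicMap_single]
  convert ((hF.pow (s.1 / p)).mul (hG.pow (s.2 / q))).mul
    (HasLead.single w (s.1 % p, s.2 % q)) using 1
  ext
  · simp [Nat.div_add_mod']
  · simp [Nat.div_add_mod']

/-- `T` differs from the identity by terms of strictly smaller weight. -/
def IsUnitriangular (w : ℕ × ℕ →+ ℤ)
    (T : AddMonoidAlgebra k (ℕ × ℕ) →ₗ[k] AddMonoidAlgebra k (ℕ × ℕ)) : Prop :=
  ∀ n : ℤ, ∀ v ∈ supported k k {s | w s ≤ n}, T v - v ∈ supported k k {s | w s < n}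

lemma isUnitriangular_adicMap {w : ℕ × ℕ →+ ℤ} {F G : AddMonoidAlgebra k (ℕ × ℕ)} {p q : ℕ}
    (hF : HasLead w F (p, 0)) (hG : HasLead w G (0, q)) :
    IsUnitriangular w (adicMap F G p q) := by
  intro n v hv
  have : supported k k {s | w s ≤ n} ≤
      (supported k k {s | w s < n}).comap (adicMap F G p q - LinearMap.id) := by
    rw [supported_eq_span_single, Submodule.span_le]
    rintro _ ⟨s, hs, rfl⟩
    rw [SetLike.mem_coe, Submodule.mem_comap, LinearMap.sub_apply, LinearMap.id_apply]
    refine supported_mono (fun t ht => ?_) (hasLead_adicMap_single hF hG s)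
    rw [Set.mem_ofPred_eq] at *
    exact ht.trans_le hs
  exact this hv

lemma exists_mem_supported_le (w : ℕ × ℕ →+ ℤ) (c : ℤ) (v : AddMonoidAlgebra k (ℕ × ℕ)) :
    ∃ d : ℕ, v ∈ supported k k {s | w s ≤ c + d} := by
  refine ⟨v.coeff.support.sup fun s => (w s - c).toNat, ?_⟩
  rw [mem_supported]
  intro s hs
  have := Finset.le_sup (f := fun s => (w s - c).toNat) hs
  simp only [Set.mem_ofPred_eq]
  omega

lemma IsUnitriangular.mem_supported {w : ℕ × ℕ →+ ℤ}
    {T : AddMonoidAlgebra k (ℕ × ℕ) →ₗ[k] AddMonoidAlgebra k (ℕ × ℕ)}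
    (hT : IsUnitriangular w T) {c : ℤ} {v : AddMonoidAlgebra k (ℕ × ℕ)}
    (hv : T v ∈ supported k k {s | w s ≤ c}) : v ∈ supported k k {s | w s ≤ c} := by
  obtain ⟨d, hd⟩ := exists_mem_supported_le w c v
  induction d with
  | zero => simpa using hd
  | succ d ih =>
    apply ih
    have h1 := hT _ v hd
    have h2 : T v ∈ supported k k {s | w s ≤ c + d} :=
      supported_mono (fun s (hs : w s ≤ c) => by simp only [Set.mem_ofPred_eq]; omega) hv
    have h3 : T v - v ∈ supported k k {s | w s ≤ c + d} :=
      supported_mono (fun s (hs : w s < _) => by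
        simp only [Set.mem_ofPred_eq]; push_cast at hs; omega) h1
    simpa using sub_mem h2 h3

lemma IsUnitriangular.range_sup {w : ℕ × ℕ →+ ℤ}
    {T : AddMonoidAlgebra k (ℕ × ℕ) →ₗ[k] AddMonoidAlgebra k (ℕ × ℕ)}
    (hT : IsUnitriangular w T) (c : ℤ) :
    LinearMap.range T ⊔ supported k k {s | w s ≤ c} = ⊤ := by
  rw [eq_top_iff]
  rintro v -
  obtain ⟨d, hd⟩ := exists_mem_supported_le w c v
  induction d generalizing v with
  | zero => exact Submodule.mem_sup_right (by simpa using hd)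
  | succ d ih =>
    have h3 : T v - v ∈ supported k k {s | w s ≤ c + d} :=
      supported_mono (fun s (hs : w s < _) => by
        simp only [Set.mem_ofPred_eq]; push_cast at hs; omega) (hT _ v hd)
    have h4 : T v ∈ LinearMap.range T ⊔ supported k k {s | w s ≤ c} :=
      Submodule.mem_sup_left ⟨v, rfl⟩
    simpa using sub_mem h4 (ih h3)

lemma exists_ker_eq_supported (p q : ℕ) :
    ∃ π : AddMonoidAlgebra k (ℕ × ℕ) →ₗ[k] (Fin p × Fin q → k), Function.Surjective π ∧
      LinearMap.ker π = supported k k {s | p ≤ s.1 ∨ q ≤ s.2} := by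
  classical
  refine ⟨LinearMap.pi fun i => (Finsupp.lapply ((i.1 : ℕ), (i.2 : ℕ))).comp
    (coeffLinearEquiv k).toLinearMap, fun h => ?_, ?_⟩
  · refine ⟨∑ i : Fin p × Fin q, single ((i.1 : ℕ), (i.2 : ℕ)) (h i), ?_⟩
    ext j
    simp only [LinearMap.pi_apply, LinearMap.comp_apply, LinearEquiv.coe_coe,
      Finsupp.lapply_apply, map_sum]
    rw [Finset.sum_eq_single j]
    · simp
    · intro i _ hij
      have : ((i.1 : ℕ), (i.2 : ℕ)) ≠ ((j.1 : ℕ), (j.2 : ℕ)) := fun hh => hij <| by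
        simp only [Prod.mk.injEq] at hh
        exact Prod.ext (Fin.ext hh.1) (Fin.ext hh.2)
      simp [this]
    · simp
  · ext v
    rw [LinearMap.mem_ker, mem_supported']
    constructor
    · intro hv s hs
      simp only [Set.mem_ofPred_eq, not_or, not_le] at hs
      exact congrFun hv (⟨s.1, hs.1⟩, ⟨s.2, hs.2⟩)
    · intro hv
      ext i
      exact hv _ (by simp)

/-- A quotient of the polynomial plane by two polynomials with leading terms `x^p` and `y^q`,
and by all monomials of weight at most `c`, has dimension `p * q`. -/
theorem nonempty_quotient_equiv {w : ℕ × ℕ →+ ℤ} {F G : AddMonoidAlgebra k (ℕ × ℕ)} {p q : ℕ}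
    (hp : 0 < p) (hq : 0 < q) (hF : HasLead w F (p, 0)) (hG : HasLead w G (0, q)) {c : ℤ}
    (hc : ∀ s, w s ≤ c → p ≤ s.1 ∨ q ≤ s.2) {I : Ideal (AddMonoidAlgebra k (ℕ × ℕ))}
    (hI : I.restrictScalars k = supported k k {s | w s ≤ c}) :
    Nonempty ((AddMonoidAlgebra k (ℕ × ℕ) ⧸ (Ideal.span {F, G} ⊔ I)) ≃ₗ[k]
      (Fin p × Fin q → k)) := by
  set J := Ideal.span {F, G} ⊔ I
  set T := adicMap F G p q with hTdef
  set E := supported k k {s : ℕ × ℕ | p ≤ s.1 ∨ q ≤ s.2} with hE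
  have hT : IsUnitriangular w T := isUnitriangular_adicMap hF hG
  have hIE : I.restrictScalars k ≤ E := hI.le.trans (supported_mono hc)
  have hFJ : F ∈ J := Ideal.mem_sup_left (Ideal.subset_span (by simp))
  have hGJ : G ∈ J := Ideal.mem_sup_left (Ideal.subset_span (by simp))
  have hTE : E.map T ≤ J.restrictScalars k := by
    rw [hE, supported_eq_span_single, Submodule.map_span_le]
    rintro _ ⟨s, hs, rfl⟩
    simp only [hTdef, adicMap_single, Submodule.restrictScalars_mem]
    refine Ideal.mul_mem_right _ _ ?_
    rcases hs with hs | hs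
    · exact Ideal.mul_mem_right _ _ (Ideal.pow_mem_of_mem _ hFJ _ (Nat.div_pos hs hp))
    · exact Ideal.mul_mem_left _ _ (Ideal.pow_mem_of_mem _ hGJ _ (Nat.div_pos hs hq))
  have htop : LinearMap.range T ⊔ I.restrictScalars k = ⊤ := hI ▸ hT.range_sup c
  have hmul : ∀ H : AddMonoidAlgebra k (ℕ × ℕ),
      (∀ s, H * T (single s 1) ∈ E.map T) → ∀ r, H * r ∈ E.map T ⊔ I.restrictScalars k := by
    intro H hH r
    have hr : r ∈ LinearMap.range T ⊔ I.restrictScalars k := htop ▸ Submodule.mem_top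
    obtain ⟨_, ⟨v, rfl⟩, i, hi, rfl⟩ := Submodule.mem_sup.1 hr
    rw [mul_add]
    refine add_mem (Submodule.mem_sup_left ?_) (Submodule.mem_sup_right (I.mul_mem_left H hi))
    have : Submodule.span k (Set.range (AddMonoidAlgebra.basis (ℕ × ℕ) k)) ≤
        (E.map T).comap ((LinearMap.mulLeft k H).comp T) := by
      rw [Submodule.span_le]
      rintro _ ⟨s, rfl⟩
      simpa using hH s
    rw [Module.Basis.span_eq] at this
    exact this trivial
  have hJle : J.restrictScalars k ≤ E.map T ⊔ I.restrictScalars k := by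
    intro r hr
    obtain ⟨u, hu, i, hi, rfl⟩ := Submodule.mem_sup.1 (show r ∈ J from hr)
    refine add_mem ?_ (Submodule.mem_sup_right hi)
    obtain ⟨a, b, rfl⟩ := Ideal.mem_span_pair.1 hu
    refine add_mem ?_ ?_
    · rw [mul_comm]
      refine hmul F (fun s => ⟨single (s.1 + p, s.2) 1, single_mem_supported (by simp) 1, ?_⟩) a
      simp only [hTdef, adicMap_single, Nat.add_div_right _ hp, Nat.add_mod_right]
      ring
    · rw [mul_comm]
      refine hmul G (fun s => ⟨single (s.1, s.2 + q) 1, single_mem_supported (by simp) 1, ?_⟩) b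
      simp only [hTdef, adicMap_single, Nat.add_div_right _ hq, Nat.add_mod_right]
      ring
  let Φ : AddMonoidAlgebra k (ℕ × ℕ) →ₗ[k] (AddMonoidAlgebra k (ℕ × ℕ) ⧸ J) :=
    (Ideal.Quotient.mkₐ k J).toLinearMap.comp T
  have hΦs : Function.Surjective Φ := by
    intro z
    obtain ⟨r, rfl⟩ := Ideal.Quotient.mk_surjective z
    have hr : r ∈ LinearMap.range T ⊔ I.restrictScalars k := htop ▸ Submodule.mem_top
    obtain ⟨_, ⟨v, rfl⟩, i, hi, rfl⟩ := Submodule.mem_sup.1 hr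
    refine ⟨v, ?_⟩
    simp only [Φ, LinearMap.comp_apply, AlgHom.toLinearMap_apply, Ideal.Quotient.mkₐ_eq_mk]
    rw [Ideal.Quotient.eq]
    have : i ∈ J := Ideal.mem_sup_right hi
    simpa using this
  have hΦk : LinearMap.ker Φ = E := by
    ext v
    have hker : v ∈ LinearMap.ker Φ ↔ T v ∈ J := by
      simp [Φ, Ideal.Quotient.eq_zero_iff_mem]
    rw [hker]
    constructor
    · intro hv
      obtain ⟨_, ⟨u, hu, rfl⟩, i, hi, h⟩ := Submodule.mem_sup.1 (hJle hv)
      have : T (v - u) ∈ supported k k {s | w s ≤ c} := by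
        rw [map_sub, ← h, add_sub_cancel_left, ← hI]
        exact hi
      have h2 : v - u ∈ E := hIE (hI ▸ hT.mem_supported this)
      simpa using add_mem h2 hu
    · intro hv
      exact hTE ⟨v, hv, rfl⟩
  obtain ⟨π, hπs, hπk⟩ := exists_ker_eq_supported (k := k) p q
  exact ⟨(Φ.quotKerEquivOfSurjective hΦs).symm.trans
    ((Submodule.quotEquivOfEq _ _ (hΦk.trans hπk.symm)).trans
      (π.quotKerEquivOfSurjective hπs))⟩

end Triangular

section Artinian

variable {k A B C : Type*} [Field k] [CommRing A] [Algebra k A] [CommRing B] [Algebra k B]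
  [CommRing C] [Algebra k C]

lemma exists_pow_mul_one_sub_mem {J : Ideal A} [Module.Finite k (A ⧸ J)] (e : A) :
    ∃ (n : ℕ) (d : A), e ^ n * (1 - e * d) ∈ J := by
  have : IsArtinianRing (A ⧸ J) := IsArtinianRing.of_finite k (A ⧸ J)
  obtain ⟨n, y, hy⟩ :=
    IsArtinian.exists_pow_succ_smul_dvd (Ideal.Quotient.mk J e) (1 : A ⧸ J)
  obtain ⟨d, rfl⟩ := Ideal.Quotient.mk_surjective y
  refine ⟨n, d, ?_⟩
  rw [← Ideal.Quotient.eq_zero_iff_mem]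
  simp only [smul_eq_mul, mul_one, Nat.succ_eq_add_one] at hy
  simp only [map_mul, map_pow, map_sub, map_one]
  linear_combination -hy

lemma pow_mul_mem_of_pow_mul_one_sub_mem {J : Ideal A} {e d p : A} {n m : ℕ}
    (h : e ^ n * (1 - e * d) ∈ J) (hp : e ^ m * p ∈ J) : e ^ n * p ∈ J := by
  obtain ⟨r, hr⟩ : 1 - e * d ∣ 1 - (e * d) ^ m := by
    simpa using sub_dvd_pow_sub_pow 1 (e * d) m
  have key : e ^ n * p = r * p * (e ^ n * (1 - e * d)) + e ^ n * d ^ m * (e ^ m * p) := by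
    have : e ^ n * p * (1 - (e * d) ^ m) = e ^ n * p * ((1 - e * d) * r) := by rw [hr]
    rw [mul_pow] at this
    linear_combination this
  rw [key]
  exact add_mem (J.mul_mem_left _ h) (J.mul_mem_left _ hp)

lemma nonempty_quotient_equiv_prod {φ : A →ₐ[k] B} {ψ : A →ₐ[k] C}
    (hφ : Function.Surjective φ) (hψ : Function.Surjective ψ) {J : Ideal A}
    (hcop : RingHom.ker φ ⊔ RingHom.ker ψ = ⊤) (hJ : RingHom.ker φ ⊓ RingHom.ker ψ = J) :
    Nonempty ((A ⧸ J) ≃ₗ[k] B × C) := by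
  obtain ⟨i, hi, j, hj, hij⟩ :=
    Submodule.mem_sup.1 (hcop ▸ Submodule.mem_top : (1 : A) ∈ RingHom.ker φ ⊔ RingHom.ker ψ)
  rw [RingHom.mem_ker] at hi hj
  have hφj : φ j = 1 := by simpa [hi] using congrArg φ hij
  have hψi : ψ i = 1 := by simpa [hj] using congrArg ψ hij
  have hs : Function.Surjective (φ.prod ψ) := by
    rintro ⟨u, v⟩
    obtain ⟨u, rfl⟩ := hφ u
    obtain ⟨v, rfl⟩ := hψ v
    exact ⟨u * j + v * i, by simp [hi, hj, hφj, hψi]⟩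
  have hk : RingHom.ker (φ.prod ψ) = J := by
    rw [← hJ]
    ext z
    simp [RingHom.mem_ker]
  exact ⟨((Ideal.quotientEquivAlgOfEq k hk.symm).trans
    (Ideal.quotientKerAlgEquivOfSurjective hs)).toLinearEquiv⟩

end Artinian

section Ideals

variable {k : Type*} [Field k]

lemma exists_ideal_eq_supported {S : Set (ℕ × ℕ)} (hS : ∀ s ∈ S, ∀ t, t + s ∈ S) :
    ∃ I : Ideal (AddMonoidAlgebra k (ℕ × ℕ)), I.restrictScalars k = supported k k S :=
  ⟨{ supported k k S with
      smul_mem' := fun _ _ hx => mul_mem_supported (s := Set.univ)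
        (fun i _ j hj => hS j hj i) (mem_supported.2 (Set.subset_univ _)) hx }, rfl⟩

lemma ideal_le_of_eq_supported {S : Set (ℕ × ℕ)} {I K : Ideal (AddMonoidAlgebra k (ℕ × ℕ))}
    (hI : I.restrictScalars k = supported k k S) (hK : ∀ s ∈ S, single s 1 ∈ K) : I ≤ K := by
  have : supported k k S ≤ K.restrictScalars k := by
    rw [supported_eq_span_single, Submodule.span_le]
    rintro _ ⟨s, hs, rfl⟩
    exact hK s hs
  intro x hx
  have hx' : x ∈ I.restrictScalars k := hx
  rw [hI] at hx'
  exact this hx'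

lemma single_mem_of_le {K : Ideal (AddMonoidAlgebra k (ℕ × ℕ))} {s t : ℕ × ℕ} (hst : s ≤ t)
    (hs : single s 1 ∈ K) : single t 1 ∈ K := by
  obtain ⟨r, rfl⟩ := exists_add_of_le hst
  have := K.mul_mem_right (single r 1) hs
  rwa [single_mul_single, one_mul] at this

end Ideals

section Laurent

/-- The inclusion of the polynomial ring into the Laurent polynomial ring. -/
def toLaurent : AddMonoidAlgebra (ZMod 2) (ℕ × ℕ) →ₐ[ZMod 2] LaurentR :=
  AddMonoidAlgebra.mapDomainAlgHom (ZMod 2) (ZMod 2)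
    ((Nat.castAddMonoidHom ℤ).prodMap (Nat.castAddMonoidHom ℤ))

lemma toLaurent_single (i j : ℕ) : toLaurent (single (i, j) 1) = mono i j := by
  simp [toLaurent, mono]

lemma toLaurent_injective : Function.Injective toLaurent := by
  refine mapDomain_injective ?_
  rintro ⟨i, j⟩ ⟨i', j'⟩ h
  simpa using h

lemma mono_mul_mono (i j i' j' : ℤ) : mono i j * mono i' j' = mono (i + i') (j + j') := by
  simp [mono, single_mul_single]

lemma mono_zero : mono 0 0 = 1 := rfl

lemma exists_mono_mul_eq_toLaurent (u : LaurentR) :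
    ∃ (n : ℕ) (u' : AddMonoidAlgebra (ZMod 2) (ℕ × ℕ)), mono n n * u = toLaurent u' := by
  induction u using AddMonoidAlgebra.induction_linear with
  | zero => exact ⟨0, 0, by simp⟩
  | add u v hu hv =>
    obtain ⟨n, u', hu⟩ := hu
    obtain ⟨m, v', hv⟩ := hv
    refine ⟨n + m, single (m, m) 1 * u' + single (n, n) 1 * v', ?_⟩
    rw [map_add, map_mul, map_mul, ← hu, ← hv, toLaurent_single, toLaurent_single,
      ← mul_assoc, ← mul_assoc, mono_mul_mono, mono_mul_mono, add_comm (m : ℤ),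
      ← mul_add]
    push_cast
    rfl
  | single s r =>
    obtain ⟨i, j⟩ := s
    refine ⟨i.natAbs + j.natAbs, r • single ((i + i.natAbs + j.natAbs).toNat,
      (j + i.natAbs + j.natAbs).toNat) 1, ?_⟩
    have h1 : ((i + i.natAbs + j.natAbs).toNat : ℤ) = i.natAbs + j.natAbs + i := by omega
    have h2 : ((j + i.natAbs + j.natAbs).toNat : ℤ) = i.natAbs + j.natAbs + j := by omega
    rw [map_smul, toLaurent_single, h1, h2, mono, single_mul_single, mono, smul_single]
    simp

/-- The polynomial `x^α f`. -/
def polyF (α b : ℕ) : AddMonoidAlgebra (ZMod 2) (ℕ × ℕ) :=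
  single (α, 0) 1 + single (α + 1, 0) 1 + single (0, b) 1

/-- The polynomial `y^β g`. -/
def polyG (β a : ℕ) : AddMonoidAlgebra (ZMod 2) (ℕ × ℕ) :=
  single (0, β) 1 + single (0, β + 1) 1 + single (a, 0) 1

lemma toLaurent_polyF (α b : ℕ) : toLaurent (polyF α b) = mono α 0 * fBB α b := by
  simp [polyF, fBB, toLaurent_single, mul_add, mono_mul_mono]

lemma toLaurent_polyG (β a : ℕ) : toLaurent (polyG β a) = mono 0 β * gBB β a := by
  simp [polyG, gBB, toLaurent_single, mul_add, mono_mul_mono]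

lemma fBB_eq (α b : ℕ) : fBB α b = mono (-α) 0 * toLaurent (polyF α b) := by
  rw [toLaurent_polyF, ← mul_assoc, mono_mul_mono]
  simp [mono_zero]

lemma gBB_eq (β a : ℕ) : gBB β a = mono 0 (-β) * toLaurent (polyG β a) := by
  rw [toLaurent_polyG, ← mul_assoc, mono_mul_mono]
  simp [mono_zero]

/-- The map from the polynomial ring to the Laurent quotient. -/
def toQuotient (α β a b : ℕ) : AddMonoidAlgebra (ZMod 2) (ℕ × ℕ) →ₐ[ZMod 2]
    LaurentR ⧸ Ideal.span ({fBB α b, gBB β a} : Set LaurentR) :=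
  (Ideal.Quotient.mkₐ (ZMod 2) _).comp toLaurent

lemma mem_ker_toQuotient {α β a b : ℕ} {p : AddMonoidAlgebra (ZMod 2) (ℕ × ℕ)} :
    p ∈ RingHom.ker (toQuotient α β a b) ↔
      toLaurent p ∈ Ideal.span ({fBB α b, gBB β a} : Set LaurentR) := by
  simp [RingHom.mem_ker, toQuotient, Ideal.Quotient.eq_zero_iff_mem]

lemma span_le_ker_toQuotient (α β a b : ℕ) :
    Ideal.span {polyF α b, polyG β a} ≤ RingHom.ker (toQuotient α β a b) := by
  rw [Ideal.span_le]
  rintro _ (rfl | rfl)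
  · rw [SetLike.mem_coe, mem_ker_toQuotient, toLaurent_polyF]
    exact Ideal.mul_mem_left _ _ (Ideal.subset_span (by simp))
  · rw [SetLike.mem_coe, mem_ker_toQuotient, toLaurent_polyG]
    exact Ideal.mul_mem_left _ _ (Ideal.subset_span (by simp))

lemma single_one_one_pow (n : ℕ) :
    (single (1, 1) 1 : AddMonoidAlgebra (ZMod 2) (ℕ × ℕ)) ^ n = single (n, n) 1 := by
  simp [single_pow]

lemma exists_pow_mul_mem_span {α β a b : ℕ} {p : AddMonoidAlgebra (ZMod 2) (ℕ × ℕ)}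
    (hp : p ∈ RingHom.ker (toQuotient α β a b)) :
    ∃ n : ℕ, single (1, 1) 1 ^ n * p ∈ Ideal.span {polyF α b, polyG β a} := by
  rw [mem_ker_toQuotient] at hp
  obtain ⟨u, v, huv⟩ := Ideal.mem_span_pair.1 hp
  obtain ⟨n, u', hu⟩ := exists_mono_mul_eq_toLaurent (u * mono (-α) 0)
  obtain ⟨m, v', hv⟩ := exists_mono_mul_eq_toLaurent (v * mono 0 (-β))
  refine ⟨n + m, ?_⟩
  rw [Ideal.mem_span_pair]
  refine ⟨single (1, 1) 1 ^ m * u', single (1, 1) 1 ^ n * v', toLaurent_injective ?_⟩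
  rw [fBB_eq, gBB_eq] at huv
  simp only [pow_add, map_add, map_mul, ← huv, ← hu, ← hv, single_one_one_pow, toLaurent_single]
  ring

lemma toQuotient_surjective {α β a b : ℕ} {d : AddMonoidAlgebra (ZMod 2) (ℕ × ℕ)}
    (hd : 1 - single (1, 1) 1 * d ∈ RingHom.ker (toQuotient α β a b)) :
    Function.Surjective (toQuotient α β a b) := by
  intro z
  obtain ⟨u, rfl⟩ := Ideal.Quotient.mk_surjective z
  obtain ⟨n, u', hu⟩ := exists_mono_mul_eq_toLaurent u
  have h1 : toQuotient α β a b (single (1, 1) 1) * toQuotient α β a b d = 1 := by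
    rw [RingHom.mem_ker, map_sub, map_one, map_mul, sub_eq_zero] at hd
    exact hd.symm
  have h2 : toQuotient α β a b u' =
      toQuotient α β a b (single (1, 1) 1) ^ n * Ideal.Quotient.mk _ u := by
    rw [← map_pow, single_one_one_pow]
    simp [toQuotient, ← hu, toLaurent_single]
  refine ⟨d ^ n * u', ?_⟩
  rw [map_mul, map_pow, h2, ← mul_assoc, ← mul_pow, mul_comm (toQuotient α β a b d), h1, one_pow,
    one_mul]

end Laurent

section Index

/-- The weight `(i, j) ↦ m i + n j`. -/
def weight (m n : ℤ) : ℕ × ℕ →+ ℤ where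
  toFun s := m * s.1 + n * s.2
  map_zero' := by simp
  map_add' s t := by
    simp only [Prod.fst_add, Prod.snd_add]
    push_cast
    ring

lemma weight_apply (m n : ℤ) (s : ℕ × ℕ) : weight m n s = m * s.1 + n * s.2 := rfl

lemma hasLead_of_eq_add {k : Type*} [Field k] {w : ℕ × ℕ →+ ℤ}
    {u : AddMonoidAlgebra k (ℕ × ℕ)} {s t r : ℕ × ℕ}
    (hu : u = single s 1 + single t 1 + single r 1) (ht : w t < w s) (hr : w r < w s) :
    HasLead w u s := by
  have : u - single s 1 = single t 1 + single r 1 := by rw [hu]; ring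
  rw [HasLead, this]
  exact add_mem (single_mem_supported ht 1) (single_mem_supported hr 1)

/-- Global count: the intersection in the affine plane. -/
lemma nonempty_affine_equiv {α β a b : ℕ} (h : a * b < (α + 1) * (β + 1)) :
    Nonempty ((AddMonoidAlgebra (ZMod 2) (ℕ × ℕ) ⧸ Ideal.span {polyF α b, polyG β a}) ≃ₗ[ZMod 2]
      (Fin (α + 1) × Fin (β + 1) → ZMod 2)) := by
  have hF : HasLead (weight (b + β + 1) (α + 1 + a)) (polyF α b) (α + 1, 0) := by
    refine hasLead_of_eq_add (t := (α, 0)) (r := (0, b)) (by rw [polyF]; ring) ?_ ?_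
    · simp only [weight_apply]
      push_cast
      nlinarith
    · simp only [weight_apply]
      zify at h
      push_cast
      nlinarith
  have hG : HasLead (weight (b + β + 1) (α + 1 + a)) (polyG β a) (0, β + 1) := by
    refine hasLead_of_eq_add (t := (0, β)) (r := (a, 0)) (by rw [polyG]; ring) ?_ ?_
    · simp only [weight_apply]
      push_cast
      nlinarith
    · simp only [weight_apply]
      zify at h
      push_cast
      nlinarith
  have hw : ∀ s, ¬ weight (b + β + 1) (α + 1 + a) s ≤ -1 := by
    intro s
    rw [weight_apply]
    have : (0 : ℤ) ≤ (b + β + 1) * s.1 + (α + 1 + a) * s.2 := by positivity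
    omega
  have hI : (⊥ : Ideal (AddMonoidAlgebra (ZMod 2) (ℕ × ℕ))).restrictScalars (ZMod 2) =
      supported (ZMod 2) (ZMod 2) {s | weight (b + β + 1) (α + 1 + a) s ≤ -1} := by
    have : {s | weight (b + β + 1) (α + 1 + a) s ≤ -1} = ∅ := Set.eq_empty_of_forall_notMem hw
    rw [this, supported_eq_span_single]
    simp
  have := nonempty_quotient_equiv α.succ_pos β.succ_pos hF hG (fun s hs => absurd hs (hw s)) hI
  rwa [sup_bot_eq] at this

/-- Local count: the intersection multiplicity at the origin. -/
lemma nonempty_local_equiv {α β a b : ℕ} (hα : 0 < α) (hβ : 0 < β) (h : α * β < a * b) {c : ℤ}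
    (hc : ∀ s, weight (-(b + β)) (-(α + a)) s ≤ c → α ≤ s.1 ∨ β ≤ s.2)
    {I : Ideal (AddMonoidAlgebra (ZMod 2) (ℕ × ℕ))}
    (hI : I.restrictScalars (ZMod 2) =
      supported (ZMod 2) (ZMod 2) {s | weight (-(b + β)) (-(α + a)) s ≤ c}) :
    Nonempty ((AddMonoidAlgebra (ZMod 2) (ℕ × ℕ) ⧸
      (Ideal.span {polyF α b, polyG β a} ⊔ I)) ≃ₗ[ZMod 2] (Fin α × Fin β → ZMod 2)) := by
  zify at h hα hβ
  refine nonempty_quotient_equiv (by omega) (by omega) ?_ ?_ hc hI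
  · refine hasLead_of_eq_add rfl ?_ ?_
    · simp only [weight_apply]
      push_cast
      nlinarith
    · simp only [weight_apply]
      push_cast
      nlinarith
  · refine hasLead_of_eq_add rfl ?_ ?_
    · simp only [weight_apply]
      push_cast
      nlinarith
    · simp only [weight_apply]
      push_cast
      nlinarith

lemma single_zero_one_mem_radical {α b : ℕ} (hα : 0 < α)
    {K : Ideal (AddMonoidAlgebra (ZMod 2) (ℕ × ℕ))} (hF : polyF α b ∈ K)
    (he : single (1, 1) 1 ∈ K.radical) : single (0, 1) 1 ∈ K.radical := by
  have h1 : single (α, 1) 1 ∈ K.radical := single_mem_of_le (s := (1, 1)) ⟨hα, le_rfl⟩ he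
  have h2 : single (α + 1, 1) 1 ∈ K.radical := single_mem_of_le (s := (1, 1)) ⟨by simp, le_rfl⟩ he
  have h3 := K.radical.mul_mem_right (single (0, 1) 1) (Ideal.le_radical hF)
  simp only [polyF, add_mul, single_mul_single, one_mul, Prod.mk_add_mk, add_zero, zero_add]
    at h3
  have h4 := (Submodule.add_mem_iff_right _ (add_mem h1 h2)).1 h3
  apply Ideal.radical_idem K |>.le
  refine ⟨b + 1, ?_⟩
  simpa [single_pow] using h4

lemma single_one_zero_mem_radical {β a : ℕ} (hβ : 0 < β)
    {K : Ideal (AddMonoidAlgebra (ZMod 2) (ℕ × ℕ))} (hG : polyG β a ∈ K)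
    (he : single (1, 1) 1 ∈ K.radical) : single (1, 0) 1 ∈ K.radical := by
  have h1 : single (1, β) 1 ∈ K.radical := single_mem_of_le (s := (1, 1)) ⟨le_rfl, hβ⟩ he
  have h2 : single (1, β + 1) 1 ∈ K.radical := single_mem_of_le (s := (1, 1)) ⟨le_rfl, by simp⟩ he
  have h3 := K.radical.mul_mem_right (single (1, 0) 1) (Ideal.le_radical hG)
  simp only [polyG, add_mul, single_mul_single, one_mul, Prod.mk_add_mk, add_zero, zero_add]
    at h3
  have h4 := (Submodule.add_mem_iff_right _ (add_mem h1 h2)).1 h3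
  apply Ideal.radical_idem K |>.le
  refine ⟨a + 1, ?_⟩
  simpa [single_pow] using h4

theorem finrank_quotient {α β a b : ℕ} (hα : 0 < α) (hβ : 0 < β) (h1 : α * β < a * b)
    (h2 : a * b < (α + 1) * (β + 1)) :
    Module.finrank (ZMod 2) (LaurentR ⧸ Ideal.span ({fBB α b, gBB β a} : Set LaurentR)) =
      α + β + 1 := by
  obtain ⟨eA⟩ := nonempty_affine_equiv h2
  set J₀ := Ideal.span {polyF α b, polyG β a}
  set J₁ := RingHom.ker (toQuotient α β a b) with hJ₁
  have hJ₀₁ : J₀ ≤ J₁ := span_le_ker_toQuotient α β a b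
  have : Module.Finite (ZMod 2) (AddMonoidAlgebra (ZMod 2) (ℕ × ℕ) ⧸ J₀) :=
    Module.Finite.equiv eA.symm
  obtain ⟨n, d, hd⟩ := exists_pow_mul_one_sub_mem (k := ZMod 2) (J := J₀) (single (1, 1) 1)
  have hd₁ : 1 - single (1, 1) 1 * d ∈ J₁ := by
    have h := hJ₀₁ hd
    rw [hJ₁, mem_ker_toQuotient, map_mul, single_one_one_pow, toLaurent_single] at h
    rw [hJ₁, mem_ker_toQuotient]
    have h' := Ideal.mul_mem_left _ (mono (-n) (-n)) h
    rw [← mul_assoc, mono_mul_mono] at h'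
    simpa [mono_zero] using h'
  set K := J₀.colon (J₁ : Set (AddMonoidAlgebra (ZMod 2) (ℕ × ℕ)))
  have hJ₀K : J₀ ≤ K := fun z hz => Submodule.mem_colon.2 fun s _ => J₀.mul_mem_right s hz
  have heK : single (1, 1) 1 ∈ K.radical := by
    refine ⟨n, Submodule.mem_colon.2 fun p hp => ?_⟩
    obtain ⟨m, hm⟩ := exists_pow_mul_mem_span hp
    exact pow_mul_mem_of_pow_mul_one_sub_mem hd hm
  obtain ⟨mx, hmx⟩ := single_one_zero_mem_radical (a := a) hβ
    (hJ₀K (Ideal.subset_span (by simp))) heK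
  obtain ⟨my, hmy⟩ := single_zero_one_mem_radical (b := b) hα
    (hJ₀K (Ideal.subset_span (by simp))) heK
  have hxK : single (mx, 0) 1 ∈ K := by simpa [single_pow] using hmx
  have hyK : single (0, my) 1 ∈ K := by simpa [single_pow] using hmy
  obtain ⟨M, hM⟩ : ∃ M, M = mx + my + α + β := ⟨_, rfl⟩
  have hc : ∀ s : ℕ × ℕ, weight (-(b + β)) (-(α + a)) s ≤ -(M * (b + β + α + a)) →
      M ≤ s.1 ∨ M ≤ s.2 := by
    intro s hs
    rw [weight_apply] at hs
    by_contra! hlt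
    zify at hlt hα hβ
    nlinarith
  obtain ⟨I, hI⟩ := exists_ideal_eq_supported (k := ZMod 2)
    (S := {s | weight (-(b + β)) (-(α + a)) s ≤ -(M * (b + β + α + a))}) (by
      intro s hs t
      simp only [Set.mem_ofPred_eq, map_add] at *
      have : 0 ≤ (b + β) * (t.1 : ℤ) + (α + a) * (t.2 : ℤ) := by positivity
      rw [weight_apply _ _ t]
      linarith)
  obtain ⟨eC⟩ := nonempty_local_equiv hα hβ h1
    (fun s hs => (hc s hs).imp (by omega) (by omega)) hI
  have hIK : I ≤ K := by
    refine ideal_le_of_eq_supported hI fun s hs => ?_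
    rcases hc s hs with h | h
    · exact single_mem_of_le (s := (mx, 0)) ⟨by simp; omega, by simp⟩ hxK
    · exact single_mem_of_le (s := (0, my)) ⟨by simp, by simp; omega⟩ hyK
  have heI : single (1, 1) 1 ^ M ∈ I := by
    have : single (M, M) 1 ∈ I.restrictScalars (ZMod 2) := by
      rw [hI]
      refine single_mem_supported ?_ 1
      simp only [Set.mem_ofPred_eq, weight_apply]
      linarith
    rw [single_one_one_pow]
    exact this
  have hcop : J₁ ⊔ (J₀ ⊔ I) = ⊤ := by
    rw [Ideal.eq_top_iff_one]
    obtain ⟨r, hr⟩ : 1 - single (1, 1) 1 * d ∣ 1 - (single (1, 1) 1 * d) ^ M := by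
      have := sub_dvd_pow_sub_pow 1 (single (1, 1) 1 * d) M
      rwa [one_pow] at this
    have e1 : 1 - (single (1, 1) 1 * d) ^ M ∈ J₁ := hr ▸ J₁.mul_mem_right r hd₁
    have e2 : (single (1, 1) 1 * d) ^ M ∈ J₀ ⊔ I := by
      rw [mul_pow]
      exact Ideal.mem_sup_right (I.mul_mem_right _ heI)
    exact Submodule.mem_sup.2 ⟨_, e1, _, e2, by ring⟩
  have hinf : J₁ ⊓ (J₀ ⊔ I) = J₀ := by
    refine le_antisymm ?_ (le_inf hJ₀₁ le_sup_left)
    rw [← Ideal.mul_eq_inf_of_coprime hcop, Ideal.mul_le]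
    intro p hp z hz
    rw [mul_comm]
    exact Submodule.mem_colon.1 (sup_le hJ₀K hIK hz) p hp
  have hker : RingHom.ker (Ideal.Quotient.mkₐ (ZMod 2) (J₀ ⊔ I)) = J₀ ⊔ I :=
    Ideal.Quotient.mkₐ_ker (ZMod 2) (J₀ ⊔ I)
  obtain ⟨e⟩ := nonempty_quotient_equiv_prod (J := J₀) (toQuotient_surjective hd₁)
    (Ideal.Quotient.mkₐ_surjective (ZMod 2) (J₀ ⊔ I)) (by rw [hker]; exact hcop)
    (by rw [hker]; exact hinf)
  have : Module.Finite (ZMod 2)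
      (LaurentR ⧸ Ideal.span ({fBB α b, gBB β a} : Set LaurentR)) :=
    Module.Finite.of_surjective ((LinearMap.fst (ZMod 2) _ _).comp e.toLinearMap)
      (Prod.fst_surjective.comp e.surjective)
  have : Module.Finite (ZMod 2) (AddMonoidAlgebra (ZMod 2) (ℕ × ℕ) ⧸ (J₀ ⊔ I)) :=
    Module.Finite.equiv eC.symm
  have hdim := e.finrank_eq
  rw [Module.finrank_prod, eA.finrank_eq, eC.finrank_eq] at hdim
  simp only [Module.finrank_fintype_fun_eq_card, Fintype.card_prod, Fintype.card_fin] at hdim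
  linarith

end Index

end BivariateBicycle

/-- If `α, β ≥ 1`, `a, b ≥ 0` and `α·β < a·b < (α+1)·(β+1)`, the topological index of BB(ᾱ, β̄, a, b) is `Q = α + β + 1`. -/
theorem bb_index_regime_middle (α β a b : ℤ) (hα : 1 ≤ α) (hβ : 1 ≤ β) (ha : 0 ≤ a) (hb : 0 ≤ b) (hab1 : α * β < a * b) (hab2 : a * b < (α + 1) * (β + 1)) :
    (Module.finrank (ZMod 2)
      (LaurentR ⧸ Ideal.span ({fBB α b, gBB β a} : Set LaurentR)) : ℤ) = α + β + 1 := by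
  lift α to ℕ using by omega
  lift β to ℕ using by omega
  lift a to ℕ using ha
  lift b to ℕ using hb
  rw [BivariateBicycle.finrank_quotient (by omega) (by omega) (by exact_mod_cast hab1)
    (by exact_mod_cast hab2)]
  push_cast
  rfl
end
end
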